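/- arXiv:1612.04790 — 3 statements merged into one kernel-verified Lean document; each statement's English description precedes it below -/
import Mathlib

section
/- Every 2-vertex-connected simple graph G with minimum degree at least 3 has a nice ear-decomposition with exactly φ(G) even ears; that is, an open ear-decomposition with φ(G) even ears in which all short ears are pendant and no edge of G connects internal vertices of two different short ears. -/
open SimpleGraph

variable {V : Type*}

/-- An *ear* of a graph `G`: a walk of length at least `1` whose two endpoints may
coincide, but all of whose other vertices are distinct (from each other and from the
endpoints); i.e. the walk is an (open) path, or a cycle when the endpoints coincide. -/
structure Ear (G : SimpleGraph V) where
  a : V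
  b : V
  walk : G.Walk a b
  length_pos : 1 ≤ walk.length
  ear : (a ≠ b ∧ walk.IsPath) ∨ (∃ h : a = b, (walk.copy rfl h.symm).IsCycle)

namespace Ear

variable {G : SimpleGraph V}

/-- The set of vertices of an ear. -/
def vertices (P : Ear G) : Set V := {v | v ∈ P.walk.support}

/-- The (set of) endpoints of an ear. -/
def endpoints (P : Ear G) : Set V := {P.a, P.b}

/-- The set `in(P)` of internal vertices of an ear. -/
def internal (P : Ear G) : Set V := P.vertices \ P.endpoints

/-- The internal vertices of an ear, as a `Finset`. -/
def internalFinset [DecidableEq V] (P : Ear G) : Finset V :=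
  P.walk.support.toFinset \ {P.a, P.b}

/-- The list of edges of an ear. -/
def edges (P : Ear G) : List (Sym2 V) := P.walk.edges

/-- A *trivial* ear has a single edge. -/
def IsTrivial (P : Ear G) : Prop := P.walk.length = 1

/-- A *short* ear has `2` or `3` edges. -/
def IsShort (P : Ear G) : Prop := P.walk.length = 2 ∨ P.walk.length = 3

/-- A *long* ear has at least `4` edges. -/
def IsLong (P : Ear G) : Prop := 4 ≤ P.walk.length

/-- An *open* ear has distinct endpoints. -/
def IsOpen (P : Ear G) : Prop := P.a ≠ P.b

end Ear

/-- The trivial ear corresponding to a single edge `wy` of `G`. -/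
def trivialEar (G : SimpleGraph V) {w y : V} (h : G.Adj w y) : Ear G where
  a := w
  b := y
  walk := SimpleGraph.Walk.cons h SimpleGraph.Walk.nil
  length_pos := by simp
  ear := Or.inl ⟨h.ne, by simp [h.ne]⟩

/-- The set of vertices appearing in the root or in the first `i` ears (those with
index `< i`) of a putative ear-decomposition. -/
def priorVerts {G : SimpleGraph V} (root : V) (ears : List (Ear G)) (i : ℕ) : Set V :=
  insert root {v | ∃ j : Fin ears.length, (j : ℕ) < i ∧ v ∈ (ears.get j).vertices}

/-- An *ear-decomposition* of `G`: a root vertex `P₀` together with a sequence of ears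
`P₁, …, P_k` such that each ear shares exactly its endpoints with the set of vertices
appearing earlier, and every edge of `G` lies in exactly one ear. -/
structure EarDecomp (G : SimpleGraph V) where
  root : V
  ears : List (Ear G)
  endpoints_sub : ∀ i : Fin ears.length,
    (ears.get i).endpoints ⊆ priorVerts root ears (i : ℕ)
  internal_new : ∀ i : Fin ears.length,
    (ears.get i).internal ∩ priorVerts root ears (i : ℕ) = ∅
  edge_cover : ∀ e ∈ G.edgeSet, ∃! i : Fin ears.length, e ∈ (ears.get i).edges

namespace EarDecomp

variable {G : SimpleGraph V}

/-- An ear-decomposition is *open* if every ear except the first one is open. -/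
def IsOpen (D : EarDecomp G) : Prop :=
  ∀ i : Fin D.ears.length, 1 ≤ (i : ℕ) → (D.ears.get i).IsOpen

/-- The number of even ears of an ear-decomposition. -/
def evenEars (D : EarDecomp G) : ℕ :=
  D.ears.countP fun P => decide (Even P.walk.length)

/-- The ear with index `i` is *pendant*: it is nontrivial, and no other nontrivial ear
has an endpoint among its internal vertices. -/
def IsPendant (D : EarDecomp G) (i : Fin D.ears.length) : Prop :=
  ¬ (D.ears.get i).IsTrivial ∧
  ∀ j : Fin D.ears.length, j ≠ i → ¬ (D.ears.get j).IsTrivial →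
    (D.ears.get j).a ∉ (D.ears.get i).internal ∧ (D.ears.get j).b ∉ (D.ears.get i).internal

/-- A *nice* ear-decomposition: open, all short ears are pendant, and no edge of `G`
connects internal vertices of two different short ears. -/
def IsNice (D : EarDecomp G) : Prop :=
  D.IsOpen ∧
  (∀ i : Fin D.ears.length, (D.ears.get i).IsShort → D.IsPendant i) ∧
  (∀ i j : Fin D.ears.length, i ≠ j → (D.ears.get i).IsShort → (D.ears.get j).IsShort →
    ∀ u ∈ (D.ears.get i).internal, ∀ v ∈ (D.ears.get j).internal, ¬ G.Adj u v)

/-- The number `π` of pendant ears of an ear-decomposition. -/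
noncomputable def numPendant (D : EarDecomp G) : ℕ :=
  letI := Classical.decPred fun i : Fin D.ears.length => D.IsPendant i
  (Finset.univ.filter fun i : Fin D.ears.length => D.IsPendant i).card

/-- The set `E'` of edges lying in nontrivial ears of an ear-decomposition. -/
noncomputable def nontrivialEdges [DecidableEq V] (D : EarDecomp G) : Finset (Sym2 V) :=
  letI := Classical.decPred fun i : Fin D.ears.length => ¬ (D.ears.get i).IsTrivial
  (Finset.univ.filter fun i : Fin D.ears.length => ¬ (D.ears.get i).IsTrivial).biUnion
    fun i => (D.ears.get i).edges.toFinset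

/-- The eardrum `M` arising from the pendant short ears of an ear-decomposition: for each
pendant `2`-ear its internal vertex, and for each pendant `3`-ear the pair of its internal
vertices (joined by an edge). -/
noncomputable def eardrum [DecidableEq V] (D : EarDecomp G) : Finset (Finset V) :=
  letI := Classical.decPred fun i : Fin D.ears.length =>
    (D.ears.get i).IsShort ∧ D.IsPendant i
  ((Finset.univ.filter fun i : Fin D.ears.length =>
      (D.ears.get i).IsShort ∧ D.IsPendant i).image
    fun i => (D.ears.get i).internalFinset)

/-- The set `V_I` of internal vertices of the non-pendant ears (including the root). -/
noncomputable def VI [DecidableEq V] (D : EarDecomp G) : Finset V :=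
  letI := Classical.decPred fun i : Fin D.ears.length => D.IsPendant i
  insert D.root ((Finset.univ.filter fun i : Fin D.ears.length => ¬ D.IsPendant i).biUnion
    fun i => (D.ears.get i).internalFinset)

end EarDecomp

/-- `φ(G)`: the minimum number of even ears over all ear-decompositions of `G`. -/
noncomputable def phi (G : SimpleGraph V) : ℕ :=
  sInf {n | ∃ D : EarDecomp G, D.evenEars = n}

/-- A graph is 2-vertex-connected if it has at least `3` vertices and deleting any single
vertex leaves a connected graph. -/
def TwoVertexConnected {W : Type*} (G : SimpleGraph W) : Prop :=
  3 ≤ Nat.card W ∧ ∀ v : W, (G.induce ({v}ᶜ : Set W)).Connected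

/-- `OPT_2VC(G)`: the minimum number of edges of a 2-vertex-connected spanning subgraph. -/
noncomputable def OPT2VC {W : Type*} (G : SimpleGraph W) : ℕ :=
  sInf {n | ∃ H : SimpleGraph W, H ≤ G ∧ TwoVertexConnected H ∧ H.edgeSet.ncard = n}

/-- An *eardrum* in `G`: a set of pairwise vertex-disjoint subgraphs, each consisting of a
single vertex or a single edge (encoded by their vertex sets). -/
def IsEardrum [DecidableEq V] (G : SimpleGraph V) (M : Finset (Finset V)) : Prop :=
  (∀ f ∈ M, (∃ v, f = {v}) ∨ (∃ u v, G.Adj u v ∧ f = {u, v})) ∧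
  ∀ f ∈ M, ∀ g ∈ M, f ≠ g → Disjoint f g

/-- `V(M)`: the set of vertices of the members of an eardrum. -/
def eardrumVerts (M : Finset (Finset V)) : Set V := {v | ∃ f ∈ M, v ∈ f}

/-- An *earmuff* for the eardrum `M`: a collection of paths `P_f`, for `f` in a subset
`F ⊆ M` (here given as a duplicate-free list of pairs `(f, P_f)`), such that each `P_f` is
a path whose set of internal vertices is exactly the vertex set of `f` (containing the
edge of `f` when `f` is an edge), whose two distinct endpoints lie outside `V(M)`, and
such that the union of all the paths is a forest. -/
structure Earmuff (G : SimpleGraph V) (M : Finset (Finset V)) where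
  pairs : List (Finset V × Ear G)
  nodup_fst : (pairs.map Prod.fst).Nodup
  mem_M : ∀ pr ∈ pairs, pr.1 ∈ M
  is_path : ∀ pr ∈ pairs, pr.2.a ≠ pr.2.b ∧ pr.2.walk.IsPath
  internal_eq : ∀ pr ∈ pairs, pr.2.internal = ↑pr.1
  edge_mem : ∀ pr ∈ pairs, ∀ u v : V, u ∈ pr.1 → v ∈ pr.1 → u ≠ v → s(u, v) ∈ pr.2.edges
  ends_outside : ∀ pr ∈ pairs, pr.2.a ∉ eardrumVerts M ∧ pr.2.b ∉ eardrumVerts M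
  forest : (SimpleGraph.fromEdgeSet {e : Sym2 V | ∃ pr ∈ pairs, e ∈ pr.2.edges}).IsAcyclic

/-- `µ(G, M)`: the maximum size of an earmuff for `M` in `G`. -/
noncomputable def mu (G : SimpleGraph V) (M : Finset (Finset V)) : ℕ :=
  sSup {n | ∃ em : Earmuff G M, em.pairs.length = n}

/-!
Start from an ear-decomposition with the fewest even ears and regard it as a way of building up the
vertex set, so that trivial ears can be dropped and restored at the end. Using 2-connectedness,
all ears after the first can be made open and the first one can be made a cycle of length at least
four, without raising the number of even ears.

Let `X` be a vertex set spanned by long ears and attach short ears to `X` alone as long as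
possible. If some later ear, or an edge, leaves an inner vertex of a short ear, then the short ear
and what is attached to it can be traversed in a different order, where a third neighbour of an
inner vertex serves as an escape route if needed. Comparing parities, this yields either a long ear
on `X` at no cost or a way of building everything with fewer even ears. Since `X` grows or the
number of even ears drops, the process stops, and then the short ears are pendant and no edge joins
two of them.
-/

/-! ### Arcs and ears as vertex lists -/

section Arcs

variable {G : SimpleGraph V} {a b x : V} {L M : List V}

/-- `IsArc G a L b` says that `a`, the entries of `L` and `b`, in this order, form a walk of `G`.
Listing the inner vertices only makes splitting and concatenating ears list surgery; the ear has
`L.length + 1` edges, so it is even iff `L.length` is odd. -/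
def IsArc (G : SimpleGraph V) (a : V) (L : List V) (b : V) : Prop :=
  List.IsChain G.Adj (a :: (L ++ [b]))

@[simp]
theorem isArc_nil : IsArc G a [] b ↔ G.Adj a b := by
  simp [IsArc]

@[simp]
theorem isArc_cons : IsArc G a (x :: L) b ↔ G.Adj a x ∧ IsArc G x L b := by
  simp [IsArc]

@[simp]
theorem isArc_append_cons : IsArc G a (L ++ x :: M) b ↔ IsArc G a L x ∧ IsArc G x M b := by
  induction L generalizing a with
  | nil => simp
  | cons y L ih => simp only [List.cons_append, isArc_cons, ih, and_assoc]

theorem IsArc.reverse (h : IsArc G a L b) : IsArc G b L.reverse a := by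
  induction L generalizing a with
  | nil => simpa using (isArc_nil.1 h).symm
  | cons y L ih =>
    rw [isArc_cons] at h
    simpa using ⟨ih h.2, h.1.symm⟩

@[simp]
theorem isArc_reverse : IsArc G b L.reverse a ↔ IsArc G a L b :=
  ⟨fun h => by simpa using h.reverse, IsArc.reverse⟩

end Arcs

/-- An arc whose inner vertices `L` are distinct and lie outside `X`. -/
structure IsArcOutside (G : SimpleGraph V) (X : Set V) (a : V) (L : List V) (b : V) : Prop where
  isArc : IsArc G a L b
  nodup : L.Nodup
  notMem : ∀ x ∈ L, x ∉ X

/-- An ear attached to the vertex set `X`. The proposition `c` tells whether closed ears are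
allowed: `c = False` describes open ears and `c = True` arbitrary ones. A closed ear is a cycle
and so has at least two inner vertices. -/
structure IsEarOver (G : SimpleGraph V) (c : Prop) (X : Set V) (a : V) (L : List V) (b : V) : Prop
    extends IsArcOutside G X a L b where
  left_mem : a ∈ X
  right_mem : b ∈ X
  closed : a = b → c ∧ 2 ≤ L.length

section Ears

variable {G : SimpleGraph V} {c : Prop} {X Y : Set V} {a b : V} {L : List V}

theorem IsArcOutside.reverse (h : IsArcOutside G X a L b) : IsArcOutside G X b L.reverse a :=
  ⟨h.isArc.reverse, List.nodup_reverse.2 h.nodup, by simpa using h.notMem⟩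

theorem IsArcOutside.anti (h : IsArcOutside G Y a L b) (hXY : X ⊆ Y) : IsArcOutside G X a L b :=
  ⟨h.isArc, h.nodup, fun x hx hxX => h.notMem x hx (hXY hxX)⟩

theorem IsArcOutside.isEarOver (h : IsArcOutside G X a L b) (ha : a ∈ X) (hb : b ∈ X)
    (hab : a ≠ b) : IsEarOver G c X a L b :=
  { h with left_mem := ha, right_mem := hb, closed := fun e => (hab e).elim }

namespace IsEarOver

theorem ne (h : IsEarOver G False X a L b) : a ≠ b := fun e => (h.closed e).1

theorem reverse (h : IsEarOver G c X a L b) : IsEarOver G c X b L.reverse a :=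
  { h.toIsArcOutside.reverse with
    left_mem := h.right_mem
    right_mem := h.left_mem
    closed := fun e => by simpa using h.closed e.symm }

theorem mono (h : IsEarOver G c X a L b) (hXY : X ⊆ Y) (hY : ∀ x ∈ L, x ∉ Y) :
    IsEarOver G c Y a L b :=
  { h with left_mem := hXY h.left_mem, right_mem := hXY h.right_mem, notMem := hY }

theorem isOpen_or_eq (h : IsEarOver G c X a L b) : IsEarOver G False X a L b ∨ a = b :=
  (eq_or_ne a b).symm.imp_left (h.toIsArcOutside.isEarOver h.left_mem h.right_mem)

end IsEarOver

end Ears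

/-! ### Building a vertex set by ears -/

/-- `BuiltFrom G c Y X m`: the vertex set `Y` arises from `X` by successively attaching ears,
at most `m` of which are even. The parameter `c` is that of `IsEarOver`; trivial ears are allowed
and leave the vertex set unchanged. -/
inductive BuiltFrom (G : SimpleGraph V) (c : Prop) (Y : Set V) : Set V → ℕ → Prop
  | refl (m : ℕ) : BuiltFrom G c Y Y m
  | step {X : Set V} {a b : V} {L : List V} {m n : ℕ} (ear : IsEarOver G c X a L b)
      (tail : BuiltFrom G c Y (X ∪ {v | v ∈ L}) m) (le : L.length % 2 + m ≤ n) :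
      BuiltFrom G c Y X n

section BuiltFrom

variable {G : SimpleGraph V} {c d : Prop} {X Y Z S T : Set V} {a b s t v x : V} {L M : List V}
  {m n : ℕ}

namespace BuiltFrom

theorem subset (h : BuiltFrom G c Y X m) : X ⊆ Y := by
  induction h with
  | refl _ => exact subset_rfl
  | step _ _ _ ih => exact Set.subset_union_left.trans ih

theorem mono (h : BuiltFrom G c Y X m) (hmn : m ≤ n) : BuiltFrom G c Y X n := by
  cases h with
  | refl m => exact .refl n
  | step ear tail le => exact .step ear tail (le.trans hmn)

theorem imp (h : BuiltFrom G c Y X m) (hcd : c → d) : BuiltFrom G d Y X m := by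
  induction h with
  | refl m => exact .refl m
  | step ear _ le ih =>
    exact .step { ear with closed := fun e => (ear.closed e).imp_left hcd } ih le

theorem trans (h : BuiltFrom G c Y X m) (h' : BuiltFrom G c Z Y n) :
    BuiltFrom G c Z X (m + n) := by
  induction h with
  | refl m => exact h'.mono (Nat.le_add_left n m)
  | step ear _ le ih => exact .step ear ih (by omega)

theorem union (h : BuiltFrom G c Y X m) (hT : T ∩ Y ⊆ X) :
    BuiltFrom G c (Y ∪ T) (X ∪ T) m := by
  induction h with
  | refl m => exact .refl m
  | @step X a b L m n ear tail le ih =>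
    have hLT : ∀ x ∈ L, x ∉ X ∪ T := fun x hx hxXT =>
      ear.notMem x hx (hxXT.elim id fun hxT => hT ⟨hxT, tail.subset (.inr hx)⟩)
    refine .step (ear.mono Set.subset_union_left hLT) ?_ le
    rw [Set.union_right_comm]
    exact ih (hT.trans Set.subset_union_left)

theorem exists_nontrivial_ear (h : BuiltFrom G c Y X m) (hXY : X ≠ Y) :
    ∃ a L b k, IsEarOver G c X a L b ∧ L ≠ [] ∧ BuiltFrom G c Y (X ∪ {v | v ∈ L}) k ∧
      L.length % 2 + k ≤ m := by
  induction h with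
  | refl m => exact (hXY rfl).elim
  | @step X a b L m n ear tail le ih =>
    by_cases hL : L = []
    · subst hL
      obtain ⟨a, L, b, k, h⟩ := ih (by simpa using hXY)
      refine ⟨a, L, b, k, by simpa using h.1, h.2.1, by simpa using h.2.2.1, ?_⟩
      exact h.2.2.2.trans ((Nat.le_add_left _ _).trans le)
    · exact ⟨a, L, b, m, ear, hL, tail, le⟩

end BuiltFrom

theorem IsEarOver.exists_reroute_of_append {L₁ L₂ : List V}
    (h : IsEarOver G c S a (L₁ ++ s :: L₂) b)
    (hM : IsArcOutside G (S ∪ {v | v ∈ L₁ ++ s :: L₂}) s M t)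
    (hY : BuiltFrom G c Y (S ∪ {v | v ∈ L₁ ++ s :: L₂} ∪ {v | v ∈ M}) m)
    (hpar : L₂.length % 2 = 0 ∨ L₁.length % 2 = 1) :
    ∃ Q n, IsArcOutside G S a Q t ∧ s :: M ⊆ Q ∧ BuiltFrom G c Y (S ∪ {v | v ∈ Q}) n ∧
      Q.length % 2 + n ≤ (L₁ ++ s :: L₂).length % 2 + M.length % 2 + m := by
  obtain ⟨⟨hL, hLn, hLS⟩, -, hb, -⟩ := h
  obtain ⟨hM, hMn, hMS⟩ := hM
  rw [isArc_append_cons] at hL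
  have hQ : IsArcOutside G S a (L₁ ++ s :: M) t := by
    refine ⟨isArc_append_cons.2 ⟨hL.1, hM⟩, ?_, ?_⟩ <;> grind
  have hrest : IsEarOver G c (S ∪ {v | v ∈ L₁ ++ s :: M}) s L₂ b := by
    refine IsArcOutside.isEarOver ⟨hL.2, ?_, ?_⟩ ?_ ?_ ?_ <;> grind
  refine ⟨L₁ ++ s :: M, L₂.length % 2 + m, hQ, List.subset_append_right _ _,
    .step hrest ?_ le_rfl, ?_⟩
  · convert hY using 1
    ext z
    simp only [Set.mem_union, Set.mem_ofPred_eq, List.mem_append, List.mem_cons]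
    tauto
  · simp only [List.length_append, List.length_cons]
    omega

-- Of the two ways to replace one half of the ear by `M`, parity allows at least one.
theorem IsEarOver.exists_reroute (h : IsEarOver G c S a L b) (hs : s ∈ L)
    (hM : IsArcOutside G (S ∪ {v | v ∈ L}) s M t)
    (hY : BuiltFrom G c Y (S ∪ {v | v ∈ L} ∪ {v | v ∈ M}) m) :
    ∃ e Q n, (e = a ∨ e = b) ∧ IsArcOutside G S e Q t ∧ s :: M ⊆ Q ∧
      BuiltFrom G c Y (S ∪ {v | v ∈ Q}) n ∧
      Q.length % 2 + n ≤ L.length % 2 + M.length % 2 + m := by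
  obtain ⟨L₁, L₂, rfl⟩ := List.append_of_mem hs
  by_cases hpar : L₂.length % 2 = 0 ∨ L₁.length % 2 = 1
  · exact ⟨a, (h.exists_reroute_of_append hM hY hpar).imp fun Q => .imp fun n => .intro (.inl rfl)⟩
  · have hrev : (L₁ ++ s :: L₂).reverse = L₂.reverse ++ s :: L₁.reverse := by simp
    have hset : {v | v ∈ L₁ ++ s :: L₂} = {v | v ∈ L₂.reverse ++ s :: L₁.reverse} := by
      simp only [← hrev, List.mem_reverse]
    have hlen := congrArg List.length hrev
    rw [hset] at hM hY
    rw [List.length_reverse] at hlen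
    rw [hlen]
    refine ⟨b, (IsEarOver.exists_reroute_of_append (hrev ▸ h.reverse) hM hY ?_).imp
      fun Q => .imp fun n => .intro (.inr rfl)⟩
    simp only [List.length_reverse]
    omega

theorem BuiltFrom.exists_arcOutside_extend (h : BuiltFrom G c Y S m) (hxY : x ∈ Y) (hxS : x ∉ S)
    (hM : IsArcOutside G Y x M t) :
    ∃ s ∈ S, ∃ Q n, IsArcOutside G S s Q t ∧ x ∈ Q ∧
      BuiltFrom G c (Y ∪ {v | v ∈ M}) (S ∪ {v | v ∈ Q}) n ∧
      Q.length % 2 + n ≤ m + M.length % 2 := by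
  induction h with
  | refl m => exact (hxS hxY).elim
  | @step S a b L m n ear tail le ih =>
    by_cases hxL : x ∈ L
    · have hbuilt := tail.union (T := {v | v ∈ M}) fun z hz => (hM.notMem z hz.1 hz.2).elim
      obtain ⟨e, Q, k, he, hQ, hsub, hk, hle⟩ := ear.exists_reroute hxL (hM.anti tail.subset) hbuilt
      exact ⟨e, he.elim (· ▸ ear.left_mem) (· ▸ ear.right_mem), Q, k, hQ, hsub (by simp), hk,
        by omega⟩
    · obtain ⟨s, hs, Q, k, hQ, hxQ, hk, hle⟩ := ih (by simp [hxS, hxL])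
      rcases hs with hs | hs
      · have hLQ : ∀ z ∈ L, z ∉ S ∪ {v | v ∈ Q} := fun z hz h =>
          h.elim (ear.notMem z hz) fun hzQ => hQ.notMem z hzQ (.inr hz)
        refine ⟨s, hs, Q, L.length % 2 + k, hQ.anti Set.subset_union_left, hxQ,
          .step (ear.mono Set.subset_union_left hLQ) ?_ le_rfl, by omega⟩
        rwa [Set.union_right_comm]
      · obtain ⟨e, Q', k', he, hQ', hsub, hk', hle'⟩ := ear.exists_reroute hs hQ hk
        exact ⟨e, he.elim (· ▸ ear.left_mem) (· ▸ ear.right_mem), Q', k', hQ',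
          hsub (List.mem_cons_of_mem s hxQ), hk', by omega⟩

theorem BuiltFrom.exists_ear_at (h : BuiltFrom G False Y X m) (hv : v ∈ X) (hvx : G.Adj v x)
    (hx : x ∈ Y) :
    ∃ s N n, IsEarOver G False X v N s ∧ (N = [] → s = x) ∧
      BuiltFrom G False Y (X ∪ {v | v ∈ N}) n ∧ N.length % 2 + n ≤ m := by
  induction h with
  | refl m =>
    exact ⟨x, [], m, IsArcOutside.isEarOver ⟨isArc_nil.2 hvx, .nil, by simp⟩ hv hx hvx.ne,
      fun _ => rfl, by simpa using .refl m, by simp⟩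
  | @step X a b L m n ear tail le ih =>
    obtain ⟨s, N, k, hN, hNx, hk, hle⟩ := ih (.inl hv)
    by_cases hab : L ≠ [] ∧ (a = v ∨ b = v)
    · obtain ⟨hL, rfl | rfl⟩ := hab
      · exact ⟨b, L, m, ear, fun h => (hL h).elim, tail, le⟩
      · exact ⟨a, L.reverse, m, ear.reverse, by simp [hL], by simpa using tail, by simpa using le⟩
    rcases hN.right_mem with hs | hs
    · have hLN : ∀ z ∈ L, z ∉ X ∪ {v | v ∈ N} := fun z hz h =>
        h.elim (ear.notMem z hz) fun hzN => hN.notMem z hzN (.inr hz)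
      refine ⟨s, N, L.length % 2 + k, (hN.toIsArcOutside.anti Set.subset_union_left).isEarOver hv hs
        hN.ne, hNx, .step (ear.mono Set.subset_union_left hLN) ?_ le_rfl, by omega⟩
      rwa [Set.union_right_comm]
    · obtain ⟨e, Q, k', he, hQ, hsub, hk', hle'⟩ :=
        ear.exists_reroute hs hN.toIsArcOutside.reverse (by simpa using hk)
      have hev : v ≠ e := by
        rintro rfl
        exact hab ⟨List.ne_nil_of_mem hs, he.imp Eq.symm Eq.symm⟩
      have heX : e ∈ X := he.elim (· ▸ ear.left_mem) (· ▸ ear.right_mem)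
      have hQne : Q ≠ [] := List.ne_nil_of_mem (hsub List.mem_cons_self)
      refine ⟨e, Q.reverse, k', hQ.reverse.isEarOver hv heX hev, by simp [hQne],
        by simpa using hk', ?_⟩
      rw [List.length_reverse] at hle' ⊢
      omega

end BuiltFrom

/-! ### Opening closed ears -/

section Opening

variable {G : SimpleGraph V} {c : Prop} {H X Y : Set V} {a b q v x y : V} {L M : List V}
  {k m n : ℕ}

theorem exists_adj_of_connected_induce_compl (h : (G.induce ({v}ᶜ : Set V)).Connected) {S : Set V}
    (hx : x ∈ S) (hxv : x ≠ v) (hy : y ∉ S) (hyv : y ≠ v) :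
    ∃ x' ∈ S, ∃ y' ∉ S, x' ≠ v ∧ y' ≠ v ∧ G.Adj x' y' := by
  obtain ⟨p⟩ := h.preconnected ⟨x, hxv⟩ ⟨y, hyv⟩
  obtain ⟨d, -, hfst, hsnd⟩ := p.exists_boundary_dart {z | z.1 ∈ S} hx hy
  exact ⟨d.fst.1, hfst, d.snd.1, hsnd, d.fst.2, d.snd.2, d.adj⟩

theorem IsEarOver.ssubset_union (h : IsEarOver G c X a L b) (hL : L ≠ []) :
    X ⊂ X ∪ {v | v ∈ L} := by
  obtain ⟨z, hz⟩ := List.exists_mem_of_ne_nil L hL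
  exact Set.ssubset_iff_exists.2 ⟨Set.subset_union_left, z, .inr hz, h.notMem z hz⟩

/-- `X` can be enlarged by a nontrivial open ear and then completed to all vertices by arbitrary
ears, with at most `m` even ears altogether. -/
def HasOpenEar (G : SimpleGraph V) (X : Set V) (m : ℕ) : Prop :=
  ∃ a L b n, IsEarOver G False X a L b ∧ L ≠ [] ∧
    BuiltFrom G True Set.univ (X ∪ {v | v ∈ L}) n ∧ L.length % 2 + n ≤ m

theorem HasOpenEar.mono (h : HasOpenEar G X m) (hmn : m ≤ n) : HasOpenEar G X n := by
  obtain ⟨a, L, b, k, hL, hne, hk, hle⟩ := h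
  exact ⟨a, L, b, k, hL, hne, hk, hle.trans hmn⟩

theorem hasOpenEar_of_bridge (hv : v ∈ X) (hHX : Disjoint H X)
    (hH : BuiltFrom G True ({v} ∪ H) {v} m) (hx : x ∈ H) (hq : q ∈ X) (hqv : q ≠ v)
    (hM : IsArcOutside G (X ∪ H) x M q)
    (hk : BuiltFrom G True Set.univ (X ∪ H ∪ {v | v ∈ M}) k) :
    HasOpenEar G X (m + M.length % 2 + k) := by
  have hvH : {v} ∪ H ⊆ X ∪ H := Set.union_subset_union_left H (Set.singleton_subset_iff.2 hv)
  have hxv : x ≠ v := by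
    rintro rfl
    exact Set.disjoint_left.1 hHX hx hv
  obtain ⟨u, hu, Q, n, hQ, hxQ, hn, hle⟩ :=
    hH.exists_arcOutside_extend (.inr hx) hxv (hM.anti hvH)
  obtain rfl : v = u := hu.symm
  have hXv : X ∩ ({v} ∪ H ∪ {z | z ∈ M}) ⊆ {v} := by
    rintro z ⟨hzX, (hz | hzH) | hzM⟩
    · exact hz
    · exact (Set.disjoint_left.1 hHX hzH hzX).elim
    · exact (hM.notMem z hzM (.inl hzX)).elim
  have hQX : ∀ z ∈ Q, z ∉ X := fun z hz hzX =>
    hQ.notMem z hz (hXv ⟨hzX, hn.subset (.inr hz)⟩)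
  refine ⟨v, Q, q, n + k, IsArcOutside.isEarOver ⟨hQ.isArc, hQ.nodup, hQX⟩ hv hq hqv.symm,
    List.ne_nil_of_mem hxQ, ?_, by omega⟩
  have hlift := hn.union (T := X) (hXv.trans Set.subset_union_left)
  rw [show {v} ∪ H ∪ {z | z ∈ M} ∪ X = X ∪ H ∪ {z | z ∈ M} by grind,
    show {v} ∪ {z | z ∈ Q} ∪ X = X ∪ {z | z ∈ Q} by grind] at hlift
  exact hlift.trans hk

theorem BuiltFrom.of_union_hanging (hH : BuiltFrom G c ({v} ∪ H) {v} m) (hv : v ∈ X)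
    (hHX : Disjoint H X) (h : BuiltFrom G c Y (X ∪ H) k) : BuiltFrom G c Y X (m + k) := by
  have hlift := hH.union (T := X) fun z hz => hz.2.resolve_right (Set.disjoint_right.1 hHX hz.1)
  rw [show {v} ∪ H ∪ X = X ∪ H by grind, show {v} ∪ X = X by grind] at hlift
  exact hlift.trans h

theorem BuiltFrom.hanging_append (hH : BuiltFrom G True ({v} ∪ H) {v} m) (hv : v ∈ X)
    (hL : IsEarOver G False (X ∪ H) a L b) (ha : a ∈ {v} ∪ H) (hb : b ∈ {v} ∪ H) :
    BuiltFrom G True ({v} ∪ (H ∪ {z | z ∈ L})) {v} (m + L.length % 2) := by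
  have hvH : {v} ∪ H ⊆ X ∪ H := Set.union_subset_union_left H (Set.singleton_subset_iff.2 hv)
  rw [← Set.union_assoc]
  exact hH.trans (.step ((hL.toIsArcOutside.anti hvH).isEarOver ha hb hL.ne) (.refl 0) le_rfl)

theorem hasOpenEar_of_not_hanging (hv : v ∈ X) (hHX : Disjoint H X)
    (hH : BuiltFrom G True ({v} ∪ H) {v} m) (hL : IsEarOver G False (X ∪ H) a L b) (hLne : L ≠ [])
    (ha : a ∈ X) (hb : b ∈ X) (hk : BuiltFrom G True Set.univ (X ∪ H ∪ {z | z ∈ L}) k) :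
    HasOpenEar G X (m + L.length % 2 + k) := by
  have hdisj : Disjoint H (X ∪ {z | z ∈ L}) := Set.disjoint_union_right.2
    ⟨hHX, Set.disjoint_right.2 fun z hz hzH => hL.notMem z hz (.inr hzH)⟩
  rw [Set.union_right_comm] at hk
  exact ⟨a, L, b, m + k, (hL.toIsArcOutside.anti Set.subset_union_left).isEarOver ha hb hL.ne, hLne,
    .of_union_hanging hH (.inl hv) hdisj hk, by omega⟩

-- `H` collects what has been built on the closed ear at `v` until some ear leaves `H` for
-- `X \ {v}`; such an ear exists because `v` is not a cut vertex.
theorem hasOpenEar_of_hanging (hcon : (G.induce ({v}ᶜ : Set V)).Connected) (hv : v ∈ X)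
    (hy : y ∈ X) (hyv : y ≠ v) (hne : H.Nonempty) (hHX : Disjoint H X)
    (hH : BuiltFrom G True ({v} ∪ H) {v} m) (h : BuiltFrom G False Set.univ (X ∪ H) k) :
    HasOpenEar G X (m + k) := by
  generalize hZ : X ∪ H = Z at h
  induction h generalizing H m with
  | refl k =>
    obtain ⟨z, hz⟩ := hne
    have hzv : z ≠ v := by
      rintro rfl
      exact Set.disjoint_left.1 hHX hz hv
    obtain ⟨x, hx, q, hq, -, hqv, hadj⟩ := exists_adj_of_connected_induce_compl hcon hz hzv
      (Set.disjoint_right.1 hHX hy) hyv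
    have hqX : q ∈ X := (hZ.symm ▸ Set.mem_univ q : q ∈ X ∪ H).resolve_right hq
    simpa using hasOpenEar_of_bridge hv hHX hH hx hqX hqv
      ⟨isArc_nil.2 hadj, .nil, by simp⟩ (by simpa [hZ] using .refl k)
  | @step _ a b L m' n ear tail le ih =>
    subst hZ
    by_cases hends : a ∈ {v} ∪ H ∧ b ∈ {v} ∪ H
    · have hdisj : Disjoint (H ∪ {z | z ∈ L}) X := Set.disjoint_union_left.2
        ⟨hHX, Set.disjoint_left.2 fun z hz hzX => ear.notMem z hz (.inl hzX)⟩
      exact (ih (hne.mono Set.subset_union_left) hdisj (hH.hanging_append hv ear hends.1 hends.2)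
        (Set.union_assoc ..).symm).mono (by omega)
    by_cases hX : a ∈ X ∧ b ∈ X
    · by_cases hLnil : L = []
      · subst hLnil
        exact (ih hne hHX hH (by simp)).mono (by omega)
      · exact (hasOpenEar_of_not_hanging hv hHX hH ear hLnil hX.1 hX.2
          (tail.imp False.elim)).mono (by omega)
    have hbridge : a ∈ H ∧ b ∈ X ∧ b ≠ v ∨ b ∈ H ∧ a ∈ X ∧ a ≠ v := by
      have := ear.left_mem
      have := ear.right_mem
      grind
    rcases hbridge with ⟨ha, hb, hbv⟩ | ⟨hb, ha, hav⟩
    · exact (hasOpenEar_of_bridge hv hHX hH ha hb hbv ear.toIsArcOutside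
        (tail.imp False.elim)).mono (by omega)
    · refine (hasOpenEar_of_bridge hv hHX hH hb ha hav ear.toIsArcOutside.reverse
        (by simpa using tail.imp False.elim)).mono ?_
      rw [List.length_reverse]
      omega

theorem BuiltFrom.isOpen_of_connected [Finite V]
    (hcon : ∀ v, (G.induce ({v}ᶜ : Set V)).Connected) (hX : X.Nontrivial)
    (h : BuiltFrom G True Set.univ X m) : BuiltFrom G False Set.univ X m := by
  induction X using WellFoundedGT.induction generalizing m with
  | ind X ih =>
  rcases eq_or_ne X Set.univ with rfl | hne
  · exact .refl m
  suffices HasOpenEar G X m by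
    obtain ⟨a, L, b, k, hL, hLne, hk, hle⟩ := this
    exact .step hL (ih _ (hL.ssubset_union hLne) (hX.mono Set.subset_union_left) hk) hle
  obtain ⟨v, L, b, k, hL, hLne, hk, hle⟩ := h.exists_nontrivial_ear hne
  rcases hL.isOpen_or_eq with hopen | rfl
  · exact ⟨v, L, b, k, hopen, hLne, hk, hle⟩
  obtain ⟨y, hy, hyv⟩ := hX.exists_ne v
  have htail := ih _ (hL.ssubset_union hLne) (hX.mono Set.subset_union_left) hk
  have hcycle : IsEarOver G True {v} v L v :=
    { hL.toIsArcOutside.anti (Set.singleton_subset_iff.2 hL.left_mem) with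
      left_mem := rfl, right_mem := rfl, closed := hL.closed }
  exact (hasOpenEar_of_hanging (hcon v) hL.left_mem hy hyv (List.exists_mem_of_ne_nil L hLne)
    (Set.disjoint_left.2 hL.notMem) (.step hcycle (.refl 0) le_rfl) htail).mono hle

end Opening

/-! ### Existence of ear-decompositions -/

section Existence

variable {G : SimpleGraph V} {X : Set V} {r s t w x y : V} {m : ℕ}

theorem exists_isArcOutside_of_isPath (p : G.Walk x t) (hp : p.IsPath) (hwx : G.Adj w x)
    (hx : x ∉ X) (ht : t ∈ X) :
    ∃ L, ∃ s ∈ X, IsArcOutside G X w (x :: L) s ∧ s ∈ p.support ∧ x :: L ⊆ p.support := by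
  induction p generalizing w with
  | nil => exact (hx ht).elim
  | @cons x y t hxy p ih =>
    rw [Walk.cons_isPath_iff] at hp
    by_cases hy : y ∈ X
    · exact ⟨[], y, hy, ⟨by simp [hwx, hxy], by simp, by simpa using hx⟩, by simp, by simp⟩
    · obtain ⟨L, s, hs, hL, hsp, hLp⟩ := ih hp.1 hxy hy ht
      refine ⟨y :: L, s, hs, ⟨isArc_cons.2 ⟨hwx, hL.isArc⟩, ?_, ?_⟩, ?_, ?_⟩
      · exact List.nodup_cons.2 ⟨fun hxL => hp.2 (hLp hxL), hL.nodup⟩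
      · exact List.forall_mem_cons.2 ⟨hx, hL.notMem⟩
      · exact List.mem_cons_of_mem x hsp
      · exact List.cons_subset_cons x hLp

theorem exists_openEar_of_adj (hcon : (G.induce ({x}ᶜ : Set V)).Connected) (hx : x ∈ X)
    (hxy : G.Adj x y) (hy : y ∉ X) (ht : t ∈ X) (htx : t ≠ x) :
    ∃ L s, IsEarOver G False X x L s ∧ L ≠ [] := by
  obtain ⟨p, hp⟩ := (hcon.preconnected ⟨y, hxy.ne'⟩ ⟨t, htx⟩).exists_isPath
  let f := Embedding.induce (G := G) ({x}ᶜ : Set V)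
  obtain ⟨L, s, hs, hL, hsp, -⟩ := exists_isArcOutside_of_isPath (p.map f.toHom)
    (hp.map f.injective) hxy hy ht
  refine ⟨y :: L, s, hL.isEarOver hx hs ?_, List.cons_ne_nil y L⟩
  rintro rfl
  rw [Walk.support_map] at hsp
  obtain ⟨z, -, hz⟩ := List.mem_map.1 hsp
  exact z.2 hz

theorem exists_builtFrom_univ [Finite V] (hcon : ∀ v, (G.induce ({v}ᶜ : Set V)).Connected)
    (hX : X.Nontrivial) : ∃ m, BuiltFrom G False Set.univ X m := by
  induction X using WellFoundedGT.induction with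
  | ind X ih =>
  rcases eq_or_ne X Set.univ with rfl | hne
  · exact ⟨0, .refl 0⟩
  obtain ⟨z, hz⟩ := (Set.ne_univ_iff_exists_notMem X).1 hne
  obtain ⟨p, hp, q, hq, hpq⟩ := hX
  obtain ⟨x, hx, y, hy, -, -, hxy⟩ := exists_adj_of_connected_induce_compl (hcon p) hq hpq.symm hz
    (by rintro rfl; exact hz hp)
  obtain ⟨t, ht, htx⟩ := Set.Nontrivial.exists_ne ⟨p, hp, q, hq, hpq⟩ x
  obtain ⟨L, s, hL, hLne⟩ := exists_openEar_of_adj (hcon x) hx hxy hy ht htx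
  obtain ⟨m, hm⟩ := ih _ (hL.ssubset_union hLne)
    (Set.Nontrivial.mono ⟨p, hp, q, hq, hpq⟩ Set.subset_union_left)
  exact ⟨L.length % 2 + m, .step hL hm le_rfl⟩

theorem exists_builtFrom_singleton [Finite V] (hcon : ∀ v, (G.induce ({v}ᶜ : Set V)).Connected)
    (hrt : G.Adj r t) (hry : G.Adj r y) (hyt : y ≠ t) :
    ∃ m, BuiltFrom G True Set.univ {r} m := by
  obtain ⟨L, s, hL, hLne⟩ := exists_openEar_of_adj (X := {r, t}) (hcon r) (by simp) hry
    (by simp [hry.ne', hyt]) (t := t) (by simp) hrt.ne'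
  obtain rfl : s = t := hL.right_mem.resolve_left hL.ne.symm
  have hcycle : IsEarOver G True {r} r (L ++ [s]) r := by
    refine ⟨⟨by simp [hL.isArc, hrt.symm], ?_, fun x hx => ?_⟩, rfl, rfl, fun _ => ⟨trivial, ?_⟩⟩
    · exact List.nodup_append.2 ⟨hL.nodup, by simp, by have := hL.notMem; grind⟩
    · have := hL.notMem x
      have := hrt.ne
      grind
    · have := List.length_pos_iff.2 hLne
      simp only [List.length_append, List.length_singleton]
      omega
  obtain ⟨m, hm⟩ := exists_builtFrom_univ (X := {r} ∪ {v | v ∈ L ++ [s]}) hcon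
    ⟨r, by simp, s, by simp, hrt.ne⟩
  exact ⟨_, .step hcycle (hm.imp False.elim) le_rfl⟩

-- An ear attached to a triangle combines with two of its edges to a longer cycle.
theorem exists_long_cycle_of_triangle (hrs : G.Adj r s) (hst : G.Adj s t) (htr : G.Adj t r)
    (hne : ({r, s, t} : Set V) ≠ Set.univ) (h : BuiltFrom G False Set.univ {r, s, t} m) :
    ∃ p L k, IsEarOver G True {p} p L p ∧ 3 ≤ L.length ∧
      BuiltFrom G False Set.univ ({p} ∪ {v | v ∈ L}) k ∧ L.length % 2 + k ≤ m := by
  obtain ⟨a, L, b, k, hL, hLne, hk, hle⟩ := h.exists_nontrivial_ear hne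
  obtain ⟨c, hac, hcb, hX⟩ : ∃ c, G.Adj a c ∧ G.Adj c b ∧ ({r, s, t} : Set V) = {a, c, b} := by
    have hab := hL.ne
    rcases hL.left_mem with rfl | rfl | rfl <;> rcases hL.right_mem with rfl | rfl | rfl
    · exact (hab rfl).elim
    · exact ⟨t, htr.symm, hst.symm, by grind⟩
    · exact ⟨s, hrs, hst, by grind⟩
    · exact ⟨t, hst, htr, by grind⟩
    · exact (hab rfl).elim
    · exact ⟨r, hrs.symm, htr.symm, by grind⟩
    · exact ⟨s, hst.symm, hrs.symm, by grind⟩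
    · exact ⟨r, htr, hrs, by grind⟩
    · exact (hab rfl).elim
  rw [hX] at hL hk
  have hlen := List.length_pos_iff.2 hLne
  have haL : a ∉ L := fun h => hL.notMem a h (by simp)
  have hbL : b ∉ L := fun h => hL.notMem b h (by simp)
  have hcL : c ∉ L := fun h => hL.notMem c h (by simp)
  have hcycle : IsEarOver G True {a} a (c :: b :: L.reverse) a := by
    refine ⟨⟨by simp [hac, hcb, hL.isArc], ?_, ?_⟩, rfl, rfl, by simp⟩
    · simp [hcb.ne, hbL, hcL, hL.nodup]
    · rintro x hx rfl
      simp [hac.ne, hL.ne, haL] at hx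
  refine ⟨a, c :: b :: L.reverse, k, hcycle, by simpa [Nat.succ_le_iff] using hlen, ?_, ?_⟩
  · convert hk using 1
    ext z
    simp [or_assoc]
  · simpa [Nat.add_assoc] using hle

theorem exists_long_cycle [Finite V] (hcon : ∀ v, (G.induce ({v}ᶜ : Set V)).Connected)
    (hthird : ∀ v s t, ∃ x, G.Adj v x ∧ x ≠ s ∧ x ≠ t) (h : BuiltFrom G True Set.univ {r} m) :
    ∃ p L k, IsEarOver G True {p} p L p ∧ 3 ≤ L.length ∧
      BuiltFrom G False Set.univ ({p} ∪ {v | v ∈ L}) k ∧ L.length % 2 + k ≤ m := by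
  obtain ⟨x, hrx, -⟩ := hthird r r r
  obtain ⟨a, L, b, k, hL, hLne, hk, hle⟩ := h.exists_nontrivial_ear
    ((Set.ne_univ_iff_exists_notMem _).2 ⟨x, hrx.ne'⟩)
  obtain rfl : r = a := hL.left_mem.symm
  obtain rfl : r = b := hL.right_mem.symm
  obtain ⟨y, hy⟩ := List.exists_mem_of_ne_nil L hLne
  have hopen := hk.isOpen_of_connected hcon
    ⟨r, by simp, y, by simp [hy], fun hry => hL.notMem y hy hry.symm⟩
  by_cases hlong : 3 ≤ L.length
  · exact ⟨r, L, k, hL, hlong, hopen, hle⟩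
  have hlen : L.length = 2 := by
    have := (hL.closed rfl).2
    omega
  obtain ⟨s, t, rfl⟩ := List.length_eq_two.1 hlen
  obtain ⟨hrs, hst, htr⟩ : G.Adj r s ∧ G.Adj s t ∧ G.Adj t r := by simpa using hL.isArc
  obtain ⟨z, hrz, hzs, hzt⟩ := hthird r s t
  have htri : {r} ∪ {v | v ∈ [s, t]} = ({r, s, t} : Set V) := by
    ext z
    simp
  obtain ⟨p, L, n, hcycle, hL3, hn, hnle⟩ := exists_long_cycle_of_triangle hrs hst htr
    ((Set.ne_univ_iff_exists_notMem _).2 ⟨z, by simp [hrz.ne', hzs, hzt]⟩) (htri ▸ hopen)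
  exact ⟨p, L, n, hcycle, hL3, hn, by omega⟩

end Existence

/-! ### Ears and their inner vertices -/

section EarLists

variable {G : SimpleGraph V} {c : Prop} {X : Set V} {a b : V} {L : List V}

namespace Ear

/-- The inner vertices of an ear in the order of traversal, which is how an `Ear` is turned into
the data of an `IsEarOver`. -/
def inner (P : Ear G) : List V := P.walk.support.tail.dropLast

/-- The ear `P` is attached to the vertex set `X`; `c` as in `IsEarOver`. -/
abbrev IsOver (P : Ear G) (c : Prop) (X : Set V) : Prop := IsEarOver G c X P.a P.inner P.b

variable (P : Ear G) (v : V)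

theorem support_eq : P.walk.support = P.a :: (P.inner ++ [P.b]) := by
  have hnil : P.walk.support.tail ≠ [] := by
    have := P.length_pos
    rw [← List.length_pos_iff, List.length_tail, P.walk.length_support]
    omega
  have hlast : P.walk.support.tail.getLast hnil = P.b := by
    rw [List.getLast_tail, Walk.getLast_support]
  conv_lhs =>
    rw [← P.walk.cons_tail_support, ← List.dropLast_append_getLast hnil, hlast]
  rfl

theorem walk_length : P.walk.length = P.inner.length + 1 := by
  simpa [P.support_eq] using P.walk.length_support.symm

theorem isArc : IsArc G P.a P.inner P.b := by
  have hchain := P.walk.isChain_adj_support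
  rwa [P.support_eq] at hchain

theorem nodup_inner_and_notMem : P.inner.Nodup ∧ P.a ∉ P.inner ∧ P.b ∉ P.inner := by
  rcases P.ear with ⟨-, hpath⟩ | ⟨hab, hcycle⟩
  · have := hpath.support_nodup
    rw [P.support_eq] at this
    grind
  · have := hcycle.support_nodup
    rw [Walk.support_copy, P.support_eq, List.tail_cons] at this
    grind

theorem two_le_length_inner (hab : P.a = P.b) : 2 ≤ P.inner.length := by
  rcases P.ear with ⟨hne, -⟩ | ⟨_, hcycle⟩
  · exact (hne hab).elim
  · have := hcycle.three_le_length
    rw [Walk.length_copy, P.walk_length] at this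
    omega

variable {v}

theorem mem_vertices : v ∈ P.vertices ↔ v = P.a ∨ v ∈ P.inner ∨ v = P.b := by
  simp [vertices, P.support_eq]

theorem mem_internal : v ∈ P.internal ↔ v ∈ P.inner := by
  obtain ⟨-, ha, hb⟩ := P.nodup_inner_and_notMem
  simp only [internal, endpoints, Set.mem_sdiff, mem_vertices, Set.mem_insert_iff,
    Set.mem_singleton_iff]
  grind

theorem isTrivial_iff : P.IsTrivial ↔ P.inner = [] := by
  rw [IsTrivial, walk_length, ← List.length_eq_zero_iff]
  omega

theorem isShort_iff : P.IsShort ↔ P.inner.length = 1 ∨ P.inner.length = 2 := by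
  rw [IsShort, walk_length]
  omega

theorem isOver_true (ha : P.a ∈ X) (hb : P.b ∈ X) (hX : ∀ x ∈ P.inner, x ∉ X) :
    P.IsOver True X :=
  ⟨⟨P.isArc, P.nodup_inner_and_notMem.1, hX⟩, ha, hb, fun h => ⟨trivial, P.two_le_length_inner h⟩⟩

end Ear

theorem IsEarOver.exists_ear (h : IsEarOver G c X a L b) :
    ∃ P : Ear G, P.a = a ∧ P.inner = L ∧ P.b = b := by
  have haL : a ∉ L := fun haL => h.notMem a haL h.left_mem
  have hbL : b ∉ L := fun hbL => h.notMem b hbL h.right_mem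
  have hnodup := h.nodup
  have hchain : List.IsChain G.Adj (a :: (L ++ [b])) := h.isArc
  obtain ⟨p, hp⟩ : ∃ p : G.Walk a b, p.support = a :: (L ++ [b]) :=
    ⟨(Walk.ofSupport _ (List.cons_ne_nil a _) hchain).copy rfl (by simp),
      (Walk.support_copy ..).trans (Walk.support_ofSupport ..)⟩
  have hlen : p.length = L.length + 1 := by simpa [hp] using p.length_support.symm
  refine ⟨⟨a, b, p, by omega, ?_⟩, rfl, by simp [Ear.inner, hp], rfl⟩
  rcases eq_or_ne a b with rfl | hab
  · refine .inr ⟨rfl, Walk.isCycle_iff_isPath_tail_and_le_length.2 ⟨?_, ?_⟩⟩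
    · rw [Walk.copy_rfl_rfl, Walk.isPath_def, Walk.support_tail_of_not_nil]
      · grind
      · rw [← Walk.length_eq_zero_iff]
        omega
    · have := (h.closed rfl).2
      rw [Walk.length_copy]
      omega
  · refine .inl ⟨hab, (Walk.isPath_def p).2 ?_⟩
    grind

/-- The inner vertices of all ears in a list. -/
def innerVerts (E : List (Ear G)) : List V := E.flatMap Ear.inner

@[simp]
theorem innerVerts_nil : innerVerts ([] : List (Ear G)) = [] := rfl

@[simp]
theorem innerVerts_cons (P : Ear G) (E : List (Ear G)) :
    innerVerts (P :: E) = P.inner ++ innerVerts E := rfl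

@[simp]
theorem innerVerts_append (E F : List (Ear G)) :
    innerVerts (E ++ F) = innerVerts E ++ innerVerts F :=
  List.flatMap_append

theorem mem_innerVerts {E : List (Ear G)} {v : V} :
    v ∈ innerVerts E ↔ ∃ P ∈ E, v ∈ P.inner :=
  List.mem_flatMap

/-- The number of even ears in a list; an ear is even iff it has an odd number of inner
vertices. -/
def evenCount (E : List (Ear G)) : ℕ := E.countP fun P => decide (Even P.walk.length)

@[simp]
theorem evenCount_nil : evenCount ([] : List (Ear G)) = 0 := rfl

@[simp]
theorem evenCount_cons (P : Ear G) (E : List (Ear G)) :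
    evenCount (P :: E) = P.inner.length % 2 + evenCount E := by
  rw [evenCount, List.countP_cons, ← evenCount, P.walk_length]
  simp only [Nat.even_iff, decide_eq_true_eq]
  split_ifs <;> omega

@[simp]
theorem evenCount_append (E F : List (Ear G)) :
    evenCount (E ++ F) = evenCount E + evenCount F :=
  List.countP_append

/-- The ears in the list can be attached to `X` one after the other; `c` as in `IsEarOver`. -/
def IsEarSeq (c : Prop) : Set V → List (Ear G) → Prop
  | _, [] => True
  | X, P :: E => P.IsOver c X ∧ IsEarSeq c (X ∪ {v | v ∈ P.inner}) E

theorem isEarSeq_nil : IsEarSeq c X ([] : List (Ear G)) := trivial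

theorem isEarSeq_cons {P : Ear G} {E : List (Ear G)} :
    IsEarSeq c X (P :: E) ↔ P.IsOver c X ∧ IsEarSeq c (X ∪ {v | v ∈ P.inner}) E := .rfl

theorem union_innerVerts_cons (P : Ear G) (E : List (Ear G)) :
    X ∪ {v | v ∈ innerVerts (P :: E)} = X ∪ {v | v ∈ P.inner} ∪ {v | v ∈ innerVerts E} := by
  ext z
  simp only [innerVerts_cons, Set.mem_union, Set.mem_ofPred_eq, List.mem_append, or_assoc]

theorem isEarSeq_append {E F : List (Ear G)} :
    IsEarSeq c X (E ++ F) ↔ IsEarSeq c X E ∧ IsEarSeq c (X ∪ {v | v ∈ innerVerts E}) F := by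
  induction E generalizing X with
  | nil => simp [isEarSeq_nil]
  | cons P E ih => rw [List.cons_append, isEarSeq_cons, ih, isEarSeq_cons, union_innerVerts_cons,
      and_assoc]

theorem isEarSeq_iff_getElem {E : List (Ear G)} :
    IsEarSeq c X E ↔
      ∀ i (hi : i < E.length), E[i].IsOver c (X ∪ {v | v ∈ innerVerts (E.take i)}) := by
  induction E generalizing X with
  | nil => simp [isEarSeq_nil]
  | cons P E ih =>
    rw [isEarSeq_cons, ih]
    refine ⟨fun h i hi => ?_, fun h => ⟨?_, fun i hi => ?_⟩⟩
    · cases i with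
      | zero => simpa using h.1
      | succ i => simpa [union_innerVerts_cons, -innerVerts_cons] using h.2 i (by simpa using hi)
    · have h₀ := h 0 (by simp)
      rw [List.getElem_cons_zero] at h₀
      simpa using h₀
    · have hsucc := h (i + 1) (by simpa using hi)
      rwa [List.take_succ_cons, union_innerVerts_cons, List.getElem_cons_succ] at hsucc

theorem IsEarSeq.imp {d : Prop} {E : List (Ear G)} (h : IsEarSeq c X E) (hcd : c → d) :
    IsEarSeq d X E := by
  induction E generalizing X with
  | nil => exact isEarSeq_nil
  | cons P E ih => exact ⟨{ h.1 with closed := fun e => (h.1.closed e).imp_left hcd }, ih h.2⟩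

theorem IsEarSeq.builtFrom {Y : Set V} {E : List (Ear G)} {m : ℕ} (h : IsEarSeq c X E)
    (hY : BuiltFrom G c Y (X ∪ {v | v ∈ innerVerts E}) m) :
    BuiltFrom G c Y X (evenCount E + m) := by
  induction E generalizing X with
  | nil => simpa using hY
  | cons P E ih =>
    rw [union_innerVerts_cons] at hY
    exact .step h.1 (ih h.2 hY) (by simp [Nat.add_assoc])

end EarLists

/-! ### Families of pendant short ears -/

/-- A family of open short ears attached to `X` whose sets of inner vertices are disjoint. -/
structure IsShortFamily {G : SimpleGraph V} (X : Set V) (S : List (Ear G)) : Prop where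
  isOver : ∀ P ∈ S, P.IsOver False X
  isShort : ∀ P ∈ S, P.IsShort
  nodup : (innerVerts S).Nodup

/-- The list `K` consists of distinct vertices outside `X`, and `X` together with `K` can be
completed to all vertices by open ears, at most `m` of them even. The surgery below only
rearranges `K`, which is why it is kept as a list up to permutation. -/
structure IsPartialGrowth (G : SimpleGraph V) (X : Set V) (K : List V) (m : ℕ) : Prop where
  nodup : K.Nodup
  notMem : ∀ x ∈ K, x ∉ X
  builtFrom : BuiltFrom G False Set.univ (X ∪ {v | v ∈ K}) m

/-- All vertices can be built from `X` either with a long ear first, using at most `m` even ears,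
or with fewer than `m` even ears. -/
def Improvable (G : SimpleGraph V) (X : Set V) (m : ℕ) : Prop :=
  (∃ a L b k, IsEarOver G False X a L b ∧ 3 ≤ L.length ∧
    BuiltFrom G False Set.univ (X ∪ {v | v ∈ L}) k ∧ L.length % 2 + k ≤ m) ∨
  ∃ k < m, BuiltFrom G False Set.univ X k

section Surgery

variable {G : SimpleGraph V} {X Z : Set V} {S S' : List (Ear G)} {a b p q u v w : V}
  {E F K K' L N : List V} {k m n : ℕ}

namespace IsPartialGrowth

theorem perm (h : IsPartialGrowth G X K m) (hK : K.Perm K') : IsPartialGrowth G X K' m :=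
  ⟨hK.nodup_iff.1 h.nodup, fun x hx => h.notMem x (hK.mem_iff.2 hx),
    by simpa only [hK.mem_iff] using h.builtFrom⟩

theorem append_ear (hK : IsPartialGrowth G X K m) (hN : IsEarOver G False (X ∪ {v | v ∈ K}) a N b)
    (h : BuiltFrom G False Set.univ (X ∪ {v | v ∈ K} ∪ {v | v ∈ N}) k) :
    IsPartialGrowth G X (N ++ K) k where
  nodup := List.nodup_append.2 ⟨hN.nodup, hK.nodup, by
    rintro x hx _ hxK rfl
    exact hN.notMem x hx (.inr hxK)⟩
  notMem x hx := (List.mem_append.1 hx).elim (fun hxN hxX => hN.notMem x hxN (.inl hxX))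
    (hK.notMem x)
  builtFrom := by
    convert h using 1
    ext z
    simp only [Set.mem_union, Set.mem_ofPred_eq, List.mem_append]
    tauto

theorem of_append_arc (h : IsPartialGrowth G X (F ++ K) m) (hF : IsArc G p F q)
    (hp : p ∈ X ∪ {v | v ∈ K}) (hq : q ∈ X ∪ {v | v ∈ K}) (hpq : p ≠ q) :
    IsPartialGrowth G X K (F.length % 2 + m) := by
  obtain ⟨hFn, hKn, hFK⟩ := List.nodup_append.1 h.nodup
  have hear : IsEarOver G False (X ∪ {v | v ∈ K}) p F q :=
    IsArcOutside.isEarOver ⟨hF, hFn, fun x hx => not_or_intro (h.notMem x (by simp [hx]))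
      fun hxK => hFK x hx x hxK rfl⟩ hp hq hpq
  refine ⟨hKn, fun x hx => h.notMem x (by simp [hx]), .step hear ?_ le_rfl⟩
  convert h.builtFrom using 1
  ext z
  simp only [Set.mem_union, Set.mem_ofPred_eq, List.mem_append]
  tauto

end IsPartialGrowth

namespace IsShortFamily

theorem perm (h : IsShortFamily X S) (hS : S.Perm S') : IsShortFamily X S' :=
  ⟨fun P hP => h.isOver P (hS.mem_iff.2 hP), fun P hP => h.isShort P (hS.mem_iff.2 hP),
    (hS.flatMap_right _).nodup_iff.1 h.nodup⟩

theorem of_cons {P : Ear G} (h : IsShortFamily X (P :: S)) : IsShortFamily X S :=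
  ⟨fun Q hQ => h.isOver Q (.tail P hQ), fun Q hQ => h.isShort Q (.tail P hQ),
    (List.nodup_append.1 h.nodup).2.1⟩

theorem notMem (h : IsShortFamily X S) (hv : v ∈ innerVerts S) : v ∉ X := by
  obtain ⟨P, hP, hvP⟩ := mem_innerVerts.1 hv
  exact (h.isOver P hP).notMem v hvP

theorem exists_perm_cons (h : IsShortFamily X S) (hw : w ∈ innerVerts S) :
    ∃ P S', w ∈ P.inner ∧ S.Perm (P :: S') ∧ IsShortFamily X (P :: S') := by
  obtain ⟨P, hP, hwP⟩ := mem_innerVerts.1 hw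
  obtain ⟨S₁, S₂, rfl⟩ := List.append_of_mem hP
  exact ⟨P, S₁ ++ S₂, hwP, List.perm_middle, h.perm List.perm_middle⟩

theorem isEarSeq (h : IsShortFamily X S) (hXZ : X ⊆ Z) (hZ : ∀ x ∈ innerVerts S, x ∉ Z) :
    IsEarSeq False Z S := by
  induction S generalizing Z with
  | nil => exact isEarSeq_nil
  | cons P S ih =>
    have hdisj := (List.nodup_append.1 h.nodup).2.2
    exact isEarSeq_cons.2 ⟨(h.isOver P List.mem_cons_self).mono hXZ fun x hx => hZ x (by simp [hx]),
      ih h.of_cons (hXZ.trans Set.subset_union_left) fun x hx =>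
        not_or_intro (hZ x (by simp [hx])) fun hxP => hdisj x hxP x hx rfl⟩

-- An arc that ends on a short ear of the family is prolonged along that ear to `X`.
theorem exists_absorb (h : IsShortFamily X S) (hL : IsArc G u L q) (hq : q ∈ innerVerts S) :
    ∃ (L' : List V) (S' : List (Ear G)), ∃ q' ∈ X, IsArc G u L' q' ∧ L' ≠ [] ∧ IsShortFamily X S' ∧
      (L ++ innerVerts S).Perm (L' ++ innerVerts S') ∧
      L'.length % 2 + evenCount S' ≤ L.length % 2 + evenCount S := by
  obtain ⟨P, S', hqP, hperm, hS'⟩ := h.exists_perm_cons hq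
  have hP := hS'.isOver P List.mem_cons_self
  have hinner : (innerVerts S).Perm (P.inner ++ innerVerts S') := hperm.flatMap_right _
  have heven : evenCount S = P.inner.length % 2 + evenCount S' :=
    (hperm.countP_eq _).trans (evenCount_cons P S')
  have harc := P.isArc
  rcases P.isShort_iff.1 (hS'.isShort P List.mem_cons_self) with hlen | hlen
  · obtain ⟨x, hx⟩ := List.length_eq_one_iff.1 hlen
    rw [hx] at hqP harc hinner heven
    obtain rfl : q = x := by simpa using hqP
    refine ⟨L ++ [q], S', P.b, hP.right_mem, by simp_all, by simp, hS'.of_cons, ?_, ?_⟩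
    · classical grind
    · simp only [List.length_append, List.length_singleton] at heven ⊢
      omega
  · obtain ⟨x, y, hxy⟩ := List.length_eq_two.1 hlen
    rw [hxy] at hqP harc hinner heven
    simp only [isArc_cons, isArc_nil] at harc
    rcases (by simpa using hqP : q = x ∨ q = y) with rfl | rfl
    · refine ⟨L ++ [q, y], S', P.b, hP.right_mem, by simp [hL, harc], by simp, hS'.of_cons, ?_, ?_⟩
      · classical grind
      · simp only [List.length_append, List.length_cons, List.length_nil] at heven ⊢
        omega
    · refine ⟨L ++ [q, x], S', P.a, hP.left_mem,
        by simp [hL, harc.1.symm, harc.2.1.symm], by simp, hS'.of_cons, ?_, ?_⟩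
      · classical grind
      · simp only [List.length_append, List.length_cons, List.length_nil] at heven ⊢
        omega

end IsShortFamily

theorem Improvable.of_arc (hS : IsShortFamily X S) (hE : IsArc G a E b) (ha : a ∈ X) (hb : b ∈ X)
    (hab : a ≠ b) (hK : IsPartialGrowth G X (E ++ innerVerts S) n)
    (hle : 3 ≤ E.length ∧ E.length % 2 + evenCount S + n ≤ m ∨
      E.length % 2 + evenCount S + n < m) : Improvable G X m := by
  obtain ⟨hEn, -, hES⟩ := List.nodup_append.1 hK.nodup
  have hear : IsEarOver G False X a E b :=
    IsArcOutside.isEarOver ⟨hE, hEn, fun x hx => hK.notMem x (by simp [hx])⟩ ha hb hab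
  have hrest : BuiltFrom G False Set.univ (X ∪ {v | v ∈ E}) (evenCount S + n) := by
    have hseq : IsEarSeq False (X ∪ {v | v ∈ E}) S := hS.isEarSeq Set.subset_union_left
      fun x hx => not_or_intro (hS.notMem hx) fun hxE => hES x hxE x hx rfl
    refine hseq.builtFrom ?_
    convert hK.builtFrom using 1
    ext z
    simp only [Set.mem_union, Set.mem_ofPred_eq, List.mem_append, or_assoc]
  rcases hle with ⟨hlong, hle⟩ | hlt
  · exact .inl ⟨a, E, b, _, hear, hlong, hrest, by omega⟩
  · exact .inr ⟨E.length % 2 + (evenCount S + n), by omega, .step hear hrest le_rfl⟩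

theorem Improvable.of_single (hS : IsShortFamily X S) (hP : IsEarOver G False X a [p] b)
    (hL : IsArc G p L q) (hq : q ∈ X) (hLne : L ≠ [])
    (hK : IsPartialGrowth G X ([p] ++ L ++ innerVerts S) n)
    (hle : 1 + L.length % 2 + evenCount S + n ≤ m) : Improvable G X m := by
  obtain ⟨e, he, heq, hep⟩ : ∃ e ∈ X, e ≠ q ∧ G.Adj e p := by
    obtain ⟨hap, hpb⟩ : G.Adj a p ∧ G.Adj p b := by simpa using hP.isArc
    rcases ne_or_eq a q with haq | rfl
    · exact ⟨a, hP.left_mem, haq, hap⟩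
    · exact ⟨b, hP.right_mem, hP.ne.symm, hpb.symm⟩
  refine .of_arc hS (E := p :: L) (isArc_cons.2 ⟨hep, hL⟩) he hq heq hK ?_
  have := List.length_pos_iff.2 hLne
  rw [List.length_cons]
  omega

end Surgery

section ShortSurgery

variable {G : SimpleGraph V} {X : Set V} {S : List (Ear G)} {a b p q s u v : V}
  {L L₁ L₂ N : List V} {m n : ℕ}

namespace Improvable

theorem of_pair_of_mem (hS : IsShortFamily X S) (hP : IsEarOver G False X a [u, v] b)
    (hL : IsArc G u L b) (hLne : L ≠ []) (hN : IsArc G v N s) (hs : s ∈ X) (hNs : N = [] → s ≠ b)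
    (hK : IsPartialGrowth G X (u :: v :: (L ++ N ++ innerVerts S)) n)
    (hle : L.length % 2 + N.length % 2 + evenCount S + n ≤ m) : Improvable G X m := by
  have hauv : G.Adj a u ∧ G.Adj u v ∧ G.Adj v b := by simpa using hP.isArc
  have := List.length_pos_iff.2 hLne
  rcases ne_or_eq b s with hbs | rfl
  · refine .of_arc hS (E := L.reverse ++ u :: v :: N) (by simp [hL, hauv, hN]) hP.right_mem hs hbs
      (hK.perm (by classical grind)) ?_
    simp only [List.length_append, List.length_reverse, List.length_cons]
    omega
  · have := List.length_pos_iff.2 fun hN => hNs hN rfl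
    have hrest : IsPartialGrowth G X (L ++ ((u :: v :: N) ++ innerVerts S)) n :=
      hK.perm (by classical grind)
    refine .of_arc hS (E := u :: v :: N) (by simp [hauv, hN]) hP.left_mem hs hP.ne
      (hrest.of_append_arc hL (by simp) (.inl hs) fun h => hP.notMem u (by simp) (h ▸ hs)) ?_
    simp only [List.length_cons]
    omega

theorem of_pair_of_loop (hS : IsShortFamily X S) (hP : IsEarOver G False X a [u, v] b)
    (hL : IsArc G u L b) (hN : IsArc G v N u) (hNne : N ≠ [])
    (hK : IsPartialGrowth G X (u :: v :: (L ++ N ++ innerVerts S)) n)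
    (hle : L.length % 2 + N.length % 2 + evenCount S + n ≤ m) : Improvable G X m := by
  have hauv : G.Adj a u ∧ G.Adj u v ∧ G.Adj v b := by simpa using hP.isArc
  have hrest : IsPartialGrowth G X (L ++ ((u :: (N.reverse ++ [v])) ++ innerVerts S)) n :=
    hK.perm (by classical grind)
  refine .of_arc hS (E := u :: (N.reverse ++ [v])) (by simp [hauv, hN]) hP.left_mem hP.right_mem
    hP.ne (hrest.of_append_arc hL (by simp) (.inl hP.right_mem)
      fun h => hP.notMem u (by simp) (h ▸ hP.right_mem)) ?_
  have := List.length_pos_iff.2 hNne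
  simp only [List.length_cons, List.length_append, List.length_reverse, List.length_nil]
  omega

-- Either half of the arc through `s` may become the rest; parity allows at least one of them.
theorem of_pair_of_split (hS : IsShortFamily X S) (hP : IsEarOver G False X a [u, v] b)
    (hL : IsArc G u (L₁ ++ s :: L₂) b) (hN : IsArc G v N s)
    (hK : IsPartialGrowth G X (u :: v :: ((L₁ ++ s :: L₂) ++ N ++ innerVerts S)) n)
    (hle : (L₁ ++ s :: L₂).length % 2 + N.length % 2 + evenCount S + n ≤ m) :
    Improvable G X m := by
  have hauv : G.Adj a u ∧ G.Adj u v ∧ G.Adj v b := by simpa using hP.isArc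
  rw [isArc_append_cons] at hL
  have hsb : s ≠ b := fun h => hK.notMem s (by simp) (h ▸ hP.right_mem)
  have hus : u ≠ s := by
    rintro rfl
    have := hK.nodup
    grind
  simp only [List.length_append, List.length_cons] at hle
  by_cases hpar : L₂.length % 2 = 0 ∨ L₁.length % 2 = 1
  · have hrest : IsPartialGrowth G X
        (L₂ ++ ((u :: L₁ ++ s :: (N.reverse ++ [v])) ++ innerVerts S)) n :=
      hK.perm (by classical grind)
    refine .of_arc hS (E := u :: L₁ ++ s :: (N.reverse ++ [v])) (by simp [hauv, hN, hL])
      hP.left_mem hP.right_mem hP.ne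
      (hrest.of_append_arc hL.2 (by simp) (.inl hP.right_mem) hsb) ?_
    simp only [List.length_append, List.length_cons, List.length_reverse, List.length_nil]
    omega
  · have hrest : IsPartialGrowth G X (L₁ ++ ((u :: v :: N ++ s :: L₂) ++ innerVerts S)) n :=
      hK.perm (by classical grind)
    refine .of_arc hS (E := u :: v :: N ++ s :: L₂) (by simp [hauv, hN, hL])
      hP.left_mem hP.right_mem hP.ne (hrest.of_append_arc hL.1 (by simp) (by simp) hus) ?_
    simp only [List.length_append, List.length_cons]
    omega

theorem of_pair_of_right (hthird : ∀ v s t, ∃ x, G.Adj v x ∧ x ≠ s ∧ x ≠ t)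
    (hS : IsShortFamily X S) (hP : IsEarOver G False X a [u, v] b) (hL : IsArc G u L b)
    (hLne : L ≠ []) (hK : IsPartialGrowth G X ([u, v] ++ L ++ innerVerts S) n)
    (hle : L.length % 2 + evenCount S + n ≤ m) : Improvable G X m := by
  obtain ⟨x, hvx, hxu, hxb⟩ := hthird v u b
  obtain ⟨s, N, k, hN, hNx, hk, hle'⟩ :=
    hK.builtFrom.exists_ear_at (.inr (by simp)) hvx (Set.mem_univ x)
  have hK' : IsPartialGrowth G X (u :: v :: (L ++ N ++ innerVerts S)) k :=
    (hK.append_ear hN hk).perm (by classical grind)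
  have hsv : v ≠ s := hN.ne
  rcases hN.right_mem with hs | hs
  · exact of_pair_of_mem hS hP hL hLne hN.isArc hs (fun h => hNx h ▸ hxb) hK' (by omega)
  simp only [Set.mem_ofPred_eq, List.mem_append, List.mem_cons, List.not_mem_nil, or_false] at hs
  rcases hs with ((rfl | hs) | hs) | hs
  · exact of_pair_of_loop hS hP hL hN.isArc (fun h => hxu (hNx h).symm) hK' (by omega)
  · exact (hsv hs.symm).elim
  · obtain ⟨L₁, L₂, rfl⟩ := List.append_of_mem hs
    exact of_pair_of_split hS hP hL hN.isArc hK' (by omega)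
  · obtain ⟨N', S', q', hq', hN', hN'ne, hS', hperm, hle''⟩ := hS.exists_absorb hN.isArc hs
    exact of_pair_of_mem hS' hP hL hLne hN' hq' (fun h => (hN'ne h).elim)
      (hK'.perm (by classical grind)) (by omega)

theorem of_pair (hthird : ∀ v s t, ∃ x, G.Adj v x ∧ x ≠ s ∧ x ≠ t)
    (hS : IsShortFamily X S) (hP : IsEarOver G False X a [u, v] b) (hL : IsArc G u L q)
    (hq : q ∈ X ∨ q = v) (hLne : L ≠ [])
    (hK : IsPartialGrowth G X ([u, v] ++ L ++ innerVerts S) n)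
    (hle : L.length % 2 + evenCount S + n ≤ m) : Improvable G X m := by
  have hauv : G.Adj a u ∧ G.Adj u v ∧ G.Adj v b := by simpa using hP.isArc
  have := List.length_pos_iff.2 hLne
  rcases hq with hq | rfl
  · rcases ne_or_eq b q with hbq | rfl
    · refine .of_arc hS (E := v :: u :: L) (by simp [hauv.2.1.symm, hauv.2.2.symm, hL])
        hP.right_mem hq hbq (hK.perm (by classical grind)) ?_
      simp only [List.length_cons]
      omega
    · exact of_pair_of_right hthird hS hP hL hLne hK hle
  · refine .of_arc hS (E := u :: (L ++ [q])) (by simp [hauv, hL]) hP.left_mem hP.right_mem hP.ne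
      (hK.perm (by classical grind)) ?_
    simp only [List.length_append, List.length_cons, List.length_nil]
    omega

theorem of_short_of_ne_nil {P : Ear G} (hthird : ∀ v s t, ∃ x, G.Adj v x ∧ x ≠ s ∧ x ≠ t)
    (hS : IsShortFamily X S) (hP : P.IsOver False X) (hshort : P.IsShort) (hp : p ∈ P.inner)
    (hL : IsArc G p L q) (hpq : p ≠ q) (hq : q ∈ X ∨ q ∈ P.inner) (hLne : L ≠ [])
    (hK : IsPartialGrowth G X (P.inner ++ L ++ innerVerts S) n)
    (hle : P.inner.length % 2 + L.length % 2 + evenCount S + n ≤ m) : Improvable G X m := by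
  rw [Ear.IsOver] at hP
  rcases P.isShort_iff.1 hshort with hlen | hlen
  · obtain ⟨x, hx⟩ := List.length_eq_one_iff.1 hlen
    rw [hx] at hp hq hP hK hle
    obtain rfl : p = x := by simpa using hp
    exact of_single hS hP hL (hq.resolve_right (by simpa using hpq.symm)) hLne hK hle
  · obtain ⟨x, y, hxy⟩ := List.length_eq_two.1 hlen
    rw [hxy] at hp hq hP hK hle
    simp only [List.length_cons, List.length_nil] at hle
    simp only [List.mem_cons, List.not_mem_nil, or_false] at hp hq
    rcases hp with rfl | rfl
    · exact of_pair hthird hS hP hL (hq.imp_right (Or.resolve_left · hpq.symm)) hLne hK (by omega)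
    · exact of_pair hthird hS hP.reverse hL (hq.imp_right (Or.resolve_right · hpq.symm)) hLne
        (hK.perm (by classical grind)) (by omega)

theorem of_short {P : Ear G} (hthird : ∀ v s t, ∃ x, G.Adj v x ∧ x ≠ s ∧ x ≠ t)
    (hS : IsShortFamily X S) (hP : P.IsOver False X) (hshort : P.IsShort) (hp : p ∈ P.inner)
    (hL : IsArc G p L q) (hpq : p ≠ q) (hq : q ∈ X ∨ q ∈ P.inner ∨ q ∈ innerVerts S)
    (hLq : L = [] → q ∈ innerVerts S)
    (hK : IsPartialGrowth G X (P.inner ++ L ++ innerVerts S) n)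
    (hle : P.inner.length % 2 + L.length % 2 + evenCount S + n ≤ m) : Improvable G X m := by
  by_cases hqS : q ∈ innerVerts S
  · obtain ⟨L', S', q', hq', hL', hL'ne, hS', hperm, hle'⟩ := hS.exists_absorb hL hqS
    exact of_short_of_ne_nil hthird hS' hP hshort hp hL' (fun h => hP.notMem p hp (h ▸ hq'))
      (.inl hq') hL'ne (hK.perm (by classical grind)) (by omega)
  · exact of_short_of_ne_nil hthird hS hP hshort hp hL hpq (by tauto) (mt hLq hqS) hK hle

end Improvable

end ShortSurgery

/-- A family of short ears attached to `X` that covers all other vertices and such that no edge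
joins two of its ears. -/
structure IsNiceFamily {G : SimpleGraph V} (X : Set V) (S : List (Ear G)) : Prop
    extends IsShortFamily X S where
  cover : ∀ v, v ∈ X ∨ v ∈ innerVerts S
  pairwise_not_adj : S.Pairwise fun P Q => ∀ u ∈ P.inner, ∀ v ∈ Q.inner, ¬G.Adj u v

section NiceFamily

variable {G : SimpleGraph V} {X : Set V} {S : List (Ear G)} {a b : V} {L : List V} {k m M : ℕ}

namespace IsShortFamily

theorem improvable_of_ear (hthird : ∀ v s t, ∃ x, G.Adj v x ∧ x ≠ s ∧ x ≠ t)
    (hS : IsShortFamily X S) (ha : a ∈ innerVerts S)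
    (hL : IsEarOver G False (X ∪ {v | v ∈ innerVerts S}) a L b) (hLne : L ≠ [])
    (hK : IsPartialGrowth G X (L ++ innerVerts S) k)
    (hle : L.length % 2 + evenCount S + k ≤ m) : Improvable G X m := by
  obtain ⟨P, S', haP, hperm, hS'⟩ := hS.exists_perm_cons ha
  have hinner : (innerVerts S).Perm (P.inner ++ innerVerts S') := hperm.flatMap_right _
  have heven : evenCount S = P.inner.length % 2 + evenCount S' :=
    (hperm.countP_eq _).trans (evenCount_cons P S')
  refine .of_short hthird hS'.of_cons (hS'.isOver P List.mem_cons_self)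
    (hS'.isShort P List.mem_cons_self) haP hL.isArc hL.ne ?_ (fun h => (hLne h).elim)
    (hK.perm (by classical grind)) (by omega)
  have hb := hL.right_mem
  rwa [Set.mem_union, Set.mem_ofPred_eq, hinner.mem_iff, List.mem_append] at hb

theorem exists_cons (hS : IsShortFamily X S) (hL : IsEarOver G False X a L b)
    (hlen : L.length = 1 ∨ L.length = 2) (hnodup : (L ++ innerVerts S).Nodup) :
    ∃ P : Ear G, P.inner = L ∧ IsShortFamily X (P :: S) := by
  obtain ⟨P, rfl, rfl, rfl⟩ := hL.exists_ear
  exact ⟨P, rfl, List.forall_mem_cons.2 ⟨hL, hS.isOver⟩,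
    List.forall_mem_cons.2 ⟨P.isShort_iff.2 hlen, hS.isShort⟩, hnodup⟩

theorem improvable_or_exists_cover (hthird : ∀ v s t, ∃ x, G.Adj v x ∧ x ≠ s ∧ x ≠ t)
    (hS : IsShortFamily X S) (h : BuiltFrom G False Set.univ (X ∪ {v | v ∈ innerVerts S}) m)
    (hle : evenCount S + m ≤ M) :
    Improvable G X M ∨ ∃ S' : List (Ear G), IsShortFamily X S' ∧
      (∀ v, v ∈ X ∨ v ∈ innerVerts S') ∧ evenCount S' ≤ M := by
  generalize hZ : X ∪ {v | v ∈ innerVerts S} = Z at h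
  induction h generalizing S with
  | refl m => exact .inr ⟨S, hS, Set.eq_univ_iff_forall.1 hZ, by omega⟩
  | @step Z a b L m n ear tail le ih =>
    subst hZ
    by_cases hLne : L = []
    · subst hLne
      exact ih hS (by omega) (by simp)
    have hK : IsPartialGrowth G X (L ++ innerVerts S) m :=
      IsPartialGrowth.append_ear ⟨hS.nodup, fun _ => hS.notMem, .step ear tail le⟩ ear tail
    rcases ear.left_mem with haX | haS
    swap
    · exact .inl (hS.improvable_of_ear hthird haS ear hLne hK (by omega))
    rcases ear.right_mem with hbX | hbS
    swap
    · refine .inl (hS.improvable_of_ear hthird hbS ear.reverse (by simpa using hLne)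
        (hK.perm (by classical grind)) ?_)
      rw [List.length_reverse]
      omega
    by_cases hlong : 3 ≤ L.length
    · exact .inl (.of_arc hS ear.isArc haX hbX ear.ne hK (.inl ⟨hlong, by omega⟩))
    · have hpos := List.length_pos_iff.2 hLne
      obtain ⟨P, rfl, hPS⟩ := hS.exists_cons
        ((ear.toIsArcOutside.anti Set.subset_union_left).isEarOver haX hbX ear.ne) (by omega)
        hK.nodup
      refine ih hPS (by rw [evenCount_cons]; omega) ?_
      rw [union_innerVerts_cons, Set.union_right_comm]

theorem improvable_of_adj {P Q : Ear G} {u v : V}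
    (hthird : ∀ v s t, ∃ x, G.Adj v x ∧ x ≠ s ∧ x ≠ t) (hS : IsShortFamily X S)
    (hcover : ∀ v, v ∈ X ∨ v ∈ innerVerts S) (hPQ : [P, Q].Sublist S) (hu : u ∈ P.inner)
    (hv : v ∈ Q.inner) (huv : G.Adj u v) (hle : evenCount S ≤ m) : Improvable G X m := by
  obtain ⟨S', hperm⟩ := hPQ.exists_perm_append
  have hinner : (innerVerts S).Perm (innerVerts (P :: Q :: S')) := hperm.flatMap_right _
  have heven : evenCount S = evenCount (P :: Q :: S') := hperm.countP_eq _
  have hS' : IsShortFamily X (P :: Q :: S') := hS.perm hperm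
  have hvQ : v ∈ innerVerts (Q :: S') := by simp [hv]
  have huniv : X ∪ {z | z ∈ innerVerts S} = Set.univ := Set.eq_univ_of_forall hcover
  refine .of_short hthird hS'.of_cons (hS'.isOver P List.mem_cons_self)
    (hS'.isShort P List.mem_cons_self) hu (L := []) (isArc_nil.2 huv) huv.ne (.inr (.inr hvQ))
    (fun _ => hvQ) (n := 0) ?_ (by simpa [heven] using hle)
  exact IsPartialGrowth.perm ⟨hS.nodup, fun _ => hS.notMem, huniv ▸ .refl 0⟩ (by simpa using hinner)

end IsShortFamily

theorem improvable_or_exists_isNiceFamily (hthird : ∀ v s t, ∃ x, G.Adj v x ∧ x ≠ s ∧ x ≠ t)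
    (h : BuiltFrom G False Set.univ X m) :
    Improvable G X m ∨ ∃ S : List (Ear G), IsNiceFamily X S ∧ evenCount S ≤ m := by
  have hnil : IsShortFamily X ([] : List (Ear G)) := ⟨by simp, by simp, by simp⟩
  rcases hnil.improvable_or_exists_cover hthird (by simpa using h) (M := m) (by simp) with
    himp | ⟨S, hS, hcover, hle⟩
  · exact .inl himp
  by_cases hadj : S.Pairwise fun P Q => ∀ u ∈ P.inner, ∀ v ∈ Q.inner, ¬G.Adj u v
  · exact .inr ⟨S, ⟨hS, hcover, hadj⟩, hle⟩
  · simp only [List.pairwise_iff_forall_sublist] at hadj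
    push Not at hadj
    obtain ⟨P, Q, hPQ, u, hu, v, hv, huv⟩ := hadj
    exact .inl (hS.improvable_of_adj hthird hcover hPQ hu hv huv hle)

theorem exists_long_isEarSeq_isNiceFamily [Finite V]
    (hthird : ∀ v s t, ∃ x, G.Adj v x ∧ x ≠ s ∧ x ≠ t) (h : BuiltFrom G False Set.univ X m) :
    ∃ A S : List (Ear G), IsEarSeq False X A ∧ (∀ P ∈ A, 3 ≤ P.inner.length) ∧
      IsNiceFamily (X ∪ {v | v ∈ innerVerts A}) S ∧ evenCount A + evenCount S ≤ m := by
  induction X using WellFoundedGT.induction generalizing m with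
  | ind X ihX =>
  induction m using Nat.strong_induction_on with
  | h m ihm =>
  rcases improvable_or_exists_isNiceFamily hthird h with
    (⟨a, L, b, k, hL, hlong, hk, hle⟩ | ⟨k, hkm, hk⟩) | ⟨S, hS, hle⟩
  · have hLne : L ≠ [] := List.ne_nil_of_length_pos (by omega)
    obtain ⟨A, S, hA, hAlong, hS, hle'⟩ := ihX _ (hL.ssubset_union hLne) hk
    obtain ⟨P, rfl, rfl, rfl⟩ := hL.exists_ear
    refine ⟨P :: A, S, ⟨hL, hA⟩, List.forall_mem_cons.2 ⟨hlong, hAlong⟩, ?_, ?_⟩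
    · rwa [union_innerVerts_cons]
    · rw [evenCount_cons]
      omega
  · obtain ⟨A, S, hA, hAlong, hS, hle⟩ := ihm k hkm hk
    exact ⟨A, S, hA, hAlong, hS, hle.trans hkm.le⟩
  · exact ⟨[], S, isEarSeq_nil, by simp, by simpa using hS, by simpa using hle⟩

end NiceFamily

/-! ### Ear sequences and ear-decompositions -/

section Decomposition

variable {G : SimpleGraph V} {c : Prop} {X : Set V} {r : V} {E : List (Ear G)}

namespace Ear

theorem exists_mem_inner_of_mem_edges (P : Ear G) (hP : P.inner ≠ []) {e : Sym2 V}
    (he : e ∈ P.edges) : ∃ x ∈ P.inner, x ∈ e := by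
  rw [edges, Walk.edges_eq_zipWith_support, P.support_eq, List.tail_cons] at he
  generalize P.a = a at he
  generalize P.inner = L at hP he
  induction L generalizing a with
  | nil => exact (hP rfl).elim
  | cons x L ih =>
    rw [List.cons_append, List.zipWith_cons_cons, List.mem_cons] at he
    rcases he with rfl | he
    · exact ⟨x, by simp, by simp⟩
    by_cases hL : L = []
    · subst hL
      obtain rfl : e = s(x, P.b) := by simpa using he
      exact ⟨x, by simp, by simp⟩
    · obtain ⟨y, hy, hye⟩ := ih x hL he
      exact ⟨y, by simp [hy], hye⟩

theorem isOpen_of_inner_eq_nil {P : Ear G} (hP : P.inner = []) : P.IsOpen := by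
  have harc := P.isArc
  rw [hP, isArc_nil] at harc
  exact harc.ne

end Ear

namespace IsEarSeq

theorem notMem (h : IsEarSeq c X E) {Q : Ear G} (hQ : Q ∈ E) {x : V} (hx : x ∈ Q.inner) :
    x ∉ X := by
  obtain ⟨i, hi, rfl⟩ := List.getElem_of_mem hQ
  exact fun hxX => (isEarSeq_iff_getElem.1 h i hi).notMem x hx (.inl hxX)

theorem ends_mem (h : IsEarSeq c X E) {Q : Ear G} (hQ : Q ∈ E) :
    Q.a ∈ X ∪ {v | v ∈ innerVerts E} ∧ Q.b ∈ X ∪ {v | v ∈ innerVerts E} := by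
  obtain ⟨i, hi, rfl⟩ := List.getElem_of_mem hQ
  have hsub : X ∪ {v | v ∈ innerVerts (E.take i)} ⊆ X ∪ {v | v ∈ innerVerts E} :=
    Set.union_subset_union_right X fun v hv =>
      let ⟨P, hP, hvP⟩ := mem_innerVerts.1 hv
      mem_innerVerts.2 ⟨P, List.take_subset i E hP, hvP⟩
  have hE := isEarSeq_iff_getElem.1 h i hi
  exact ⟨hsub hE.left_mem, hsub hE.right_mem⟩

theorem isOpen (h : IsEarSeq False X E) {Q : Ear G} (hQ : Q ∈ E) : Q.IsOpen := by
  obtain ⟨i, hi, rfl⟩ := List.getElem_of_mem hQ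
  exact (isEarSeq_iff_getElem.1 h i hi).ne

theorem pairwise_edges_disjoint (h : IsEarSeq c X E) (hne : ∀ P ∈ E, P.inner ≠ []) :
    E.Pairwise fun P Q => P.edges.Disjoint Q.edges := by
  induction E generalizing X with
  | nil => exact .nil
  | cons P E ih =>
    obtain ⟨hP, hE⟩ := isEarSeq_cons.1 h
    refine .cons (fun Q hQ e heP heQ => ?_) (ih hE fun Q hQ => hne Q (.tail P hQ))
    obtain ⟨x, hxQ, hxe⟩ := Q.exists_mem_inner_of_mem_edges (hne Q (.tail P hQ)) heQ
    refine hE.notMem hQ hxQ ?_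
    rcases P.mem_vertices.1 (Walk.mem_support_of_mem_edges heP hxe) with rfl | hx | rfl
    · exact .inl hP.left_mem
    · exact .inr hx
    · exact .inl hP.right_mem

end IsEarSeq

theorem priorVerts_succ (r : V) {i : ℕ} (hi : i < E.length) :
    priorVerts r E (i + 1) = priorVerts r E i ∪ E[i].vertices := by
  ext v
  simp only [priorVerts, Set.mem_insert_iff, Set.mem_ofPred_eq, Set.mem_union, or_assoc,
    Order.lt_add_one_iff, le_iff_lt_or_eq]
  refine or_congr_right ⟨?_, ?_⟩
  · rintro ⟨j, hj | hj, hv⟩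
    · exact .inl ⟨j, hj, hv⟩
    · subst hj
      exact .inr hv
  · rintro (⟨j, hj, hv⟩ | hv)
    · exact ⟨j, .inl hj, hv⟩
    · exact ⟨⟨i, hi⟩, .inr rfl, hv⟩

theorem priorVerts_eq_of_endpoints {n : ℕ} (hn : n ≤ E.length)
    (h : ∀ i (hi : i < n), E[i].endpoints ⊆ priorVerts r E i) :
    priorVerts r E n = {r} ∪ {v | v ∈ innerVerts (E.take n)} := by
  induction n with
  | zero => simp [priorVerts]
  | succ n ih =>
    have hends := h n (by omega)
    rw [priorVerts_succ r hn, ← List.take_concat_get' E n hn, innerVerts_append]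
    rw [ih (by omega) fun i hi => h i (by omega)] at hends ⊢
    obtain ⟨ha, hb⟩ := Set.pair_subset_iff.1 hends
    ext v
    simp only [Set.mem_union, Set.mem_ofPred_eq, Ear.mem_vertices, List.mem_append,
      innerVerts_cons, innerVerts_nil, List.not_mem_nil, or_false] at ha hb ⊢
    grind

theorem isEarSeq_true_iff_priorVerts :
    IsEarSeq True {r} E ↔
      (∀ i : Fin E.length, (E.get i).endpoints ⊆ priorVerts r E i) ∧
      ∀ i : Fin E.length, (E.get i).internal ∩ priorVerts r E i = ∅ := by
  rw [isEarSeq_iff_getElem]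
  constructor
  · intro h
    have hends : ∀ i (hi : i < E.length), E[i].endpoints ⊆ priorVerts r E i := by
      intro i
      induction i using Nat.strong_induction_on with
      | h i ih =>
      intro hi
      rw [priorVerts_eq_of_endpoints hi.le fun j hj => ih j hj (hj.trans hi)]
      exact Set.pair_subset_iff.2 ⟨(h i hi).left_mem, (h i hi).right_mem⟩
    refine ⟨fun i => hends i i.2, fun i => Set.eq_empty_of_forall_notMem fun x hx => ?_⟩
    rw [priorVerts_eq_of_endpoints i.2.le fun j hj => hends j (hj.trans i.2)] at hx
    exact (h i i.2).notMem x ((Ear.mem_internal _).1 hx.1) hx.2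
  · rintro ⟨hends, hinner⟩ i hi
    rw [← priorVerts_eq_of_endpoints hi.le fun j hj => hends ⟨j, hj.trans hi⟩]
    obtain ⟨ha, hb⟩ := Set.pair_subset_iff.1 (hends ⟨i, hi⟩)
    exact Ear.isOver_true _ ha hb fun x hx hxp =>
      (hinner ⟨i, hi⟩).le ⟨(Ear.mem_internal _).2 hx, hxp⟩

theorem EarDecomp.isEarSeq (D : EarDecomp G) : IsEarSeq True {D.root} D.ears :=
  isEarSeq_true_iff_priorVerts.2 ⟨D.endpoints_sub, D.internal_new⟩

theorem EarDecomp.builtFrom (hadj : ∀ v, ∃ x, G.Adj v x) (D : EarDecomp G) :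
    BuiltFrom G True Set.univ {D.root} D.evenEars := by
  have hcover : ({D.root} : Set V) ∪ {v | v ∈ innerVerts D.ears} = Set.univ := by
    refine Set.eq_univ_of_forall fun v => ?_
    obtain ⟨x, hvx⟩ := hadj v
    obtain ⟨i, he, -⟩ := D.edge_cover s(v, x) hvx
    have hP : D.ears.get i ∈ D.ears := List.get_mem _ _
    rcases (Ear.mem_vertices _).1 (Walk.fst_mem_support_of_mem_edges _ he) with hv | hv | hv
    · exact hv ▸ (D.isEarSeq.ends_mem hP).1
    · exact .inr (mem_innerVerts.2 ⟨_, hP, hv⟩)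
    · exact hv ▸ (D.isEarSeq.ends_mem hP).2
  exact D.isEarSeq.builtFrom (m := 0) (by rw [hcover]; exact .refl 0)

theorem exists_trivial_ears {F : Set (Sym2 V)} (hF : F.Finite) (hFG : F ⊆ G.edgeSet) :
    ∃ T : List (Ear G), (∀ P ∈ T, P.inner = []) ∧
      (T.Pairwise fun P Q => P.edges.Disjoint Q.edges) ∧ ∀ e, e ∈ F ↔ ∃ P ∈ T, e ∈ P.edges := by
  induction F, hF using Set.Finite.induction_on with
  | empty => exact ⟨[], by simp, .nil, by simp⟩
  | @insert e F heF _ ih =>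
    obtain ⟨heG, hFG⟩ := Set.insert_subset_iff.1 hFG
    obtain ⟨T, hT, hpair, hmem⟩ := ih hFG
    induction e with
    | h x y =>
    have hedges : (trivialEar G heG).edges = [s(x, y)] := rfl
    refine ⟨trivialEar G heG :: T, List.forall_mem_cons.2 ⟨rfl, hT⟩, .cons ?_ hpair, ?_⟩
    · intro Q hQ
      rw [hedges, List.singleton_disjoint]
      exact fun he => heF ((hmem _).2 ⟨Q, hQ, he⟩)
    · simp [hedges, hmem]

theorem existsUnique_get_of_pairwise {α : Type*} {p : α → Prop} {l : List α} (hex : ∃ x ∈ l, p x)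
    (hpair : l.Pairwise fun x y => ¬(p x ∧ p y)) : ∃! i : Fin l.length, p (l.get i) := by
  obtain ⟨x, hx, hpx⟩ := hex
  obtain ⟨i, rfl⟩ := List.mem_iff_get.1 hx
  refine ⟨i, hpx, fun j hpj => ?_⟩
  rw [List.pairwise_iff_get] at hpair
  rcases lt_trichotomy i j with hij | hij | hij
  · exact (hpair i j hij ⟨hpx, hpj⟩).elim
  · exact hij.symm
  · exact (hpair j i hij ⟨hpj, hpx⟩).elim

theorem isEarSeq_of_forall_inner_eq_nil {T : List (Ear G)} (hT : ∀ P ∈ T, P.inner = []) :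
    IsEarSeq True Set.univ T :=
  isEarSeq_iff_getElem.2 fun i hi => Ear.isOver_true _ (by simp) (by simp)
    (by simp [hT T[i] (List.getElem_mem hi)])

theorem IsEarSeq.exists_earDecomp [Finite V] (h : IsEarSeq True {r} E)
    (hcover : ({r} : Set V) ∪ {v | v ∈ innerVerts E} = Set.univ) (hne : ∀ P ∈ E, P.inner ≠ []) :
    ∃ (D : EarDecomp G) (T : List (Ear G)), D.ears = E ++ T ∧ ∀ P ∈ T, P.inner = [] := by
  obtain ⟨T, hT, hTpair, hTmem⟩ := exists_trivial_ears
    (Set.toFinite {e ∈ G.edgeSet | ∀ P ∈ E, e ∉ P.edges}) (Set.sep_subset _ _)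
  have hpair : (E ++ T).Pairwise fun P Q => P.edges.Disjoint Q.edges :=
    List.pairwise_append.2 ⟨h.pairwise_edges_disjoint hne, hTpair,
      fun P hP Q hQ e heP heQ => ((hTmem e).2 ⟨Q, hQ, heQ⟩).2 P hP heP⟩
  have hseq : IsEarSeq True {r} (E ++ T) :=
    isEarSeq_append.2 ⟨h, hcover ▸ isEarSeq_of_forall_inner_eq_nil hT⟩
  obtain ⟨hends, hinner⟩ := isEarSeq_true_iff_priorVerts.1 hseq
  refine ⟨⟨r, E ++ T, hends, hinner, fun e he => ?_⟩, T, rfl, hT⟩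
  refine existsUnique_get_of_pairwise ?_ (hpair.imp fun hdisj hpq => hdisj hpq.1 hpq.2)
  by_cases hE : ∃ P ∈ E, e ∈ P.edges
  · exact hE.imp fun P => .imp_left (List.mem_append_left T)
  · push Not at hE
    exact ((hTmem e).1 ⟨he, hE⟩).imp fun P => .imp_left (List.mem_append_right E)

end Decomposition

/-! ### Nice ear-decompositions -/

section Nice

variable {G : SimpleGraph V} {X : Set V} {m : ℕ} {B S T : List (Ear G)} {D : EarDecomp G}

namespace Ear

variable {P : Ear G}

theorem not_isShort_of_three_le (hP : 3 ≤ P.inner.length) : ¬P.IsShort := by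
  rw [P.isShort_iff]
  omega

theorem not_isShort_of_inner_eq_nil (hP : P.inner = []) : ¬P.IsShort := by
  simp [P.isShort_iff, hP]

end Ear

namespace EarDecomp

theorem isOpen_of_ears_eq_cons {C : Ear G} {R : List (Ear G)} (hD : D.ears = C :: R)
    (hR : ∀ P ∈ R, P.IsOpen) : D.IsOpen := by
  rcases D with ⟨r, E, hends, hinner, hcover⟩
  obtain rfl : E = C :: R := hD
  intro i hi
  obtain ⟨j, rfl⟩ := Fin.eq_succ_of_ne_zero (i := i) (by rintro rfl; simp at hi)
  exact hR _ (List.get_mem R j)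

theorem isPendant_of_isShort (hD : D.ears = B ++ S ++ T) (hB : ∀ P ∈ B, 3 ≤ P.inner.length)
    (hBX : ∀ P ∈ B, P.a ∈ X ∧ P.b ∈ X) (hS : IsShortFamily X S) (hT : ∀ P ∈ T, P.inner = [])
    (i : Fin D.ears.length) (hi : (D.ears.get i).IsShort) : D.IsPendant i := by
  have hmem : ∀ j, D.ears.get j ∈ B ++ S ++ T := fun j => hD ▸ List.get_mem D.ears j
  have hiS : D.ears.get i ∈ S := by
    rcases List.mem_append.1 (hmem i) with hiBS | hiT
    · exact (List.mem_append.1 hiBS).resolve_left fun hiB =>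
        Ear.not_isShort_of_three_le (hB _ hiB) hi
    · exact (Ear.not_isShort_of_inner_eq_nil (hT _ hiT) hi).elim
  have hnotMem : ∀ x ∈ X, x ∉ (D.ears.get i).internal := fun x hx hxi =>
    (hS.isOver _ hiS).notMem x ((Ear.mem_internal _).1 hxi) hx
  refine ⟨fun htriv => Ear.not_isShort_of_inner_eq_nil ((Ear.isTrivial_iff _).1 htriv) hi,
    fun j _ hj => ?_⟩
  have hends : (D.ears.get j).a ∈ X ∧ (D.ears.get j).b ∈ X := by
    rcases List.mem_append.1 (hmem j) with hjBS | hjT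
    · rcases List.mem_append.1 hjBS with hjB | hjS
      · exact hBX _ hjB
      · exact ⟨(hS.isOver _ hjS).left_mem, (hS.isOver _ hjS).right_mem⟩
    · exact (hj ((Ear.isTrivial_iff _).2 (hT _ hjT))).elim
  exact hends.imp (hnotMem _) (hnotMem _)

theorem not_adj_of_isShort (hD : D.ears = B ++ S ++ T) (hB : ∀ P ∈ B, 3 ≤ P.inner.length)
    (hS : S.Pairwise fun P Q => ∀ u ∈ P.inner, ∀ v ∈ Q.inner, ¬G.Adj u v)
    (hT : ∀ P ∈ T, P.inner = []) (i j : Fin D.ears.length) (hij : i ≠ j)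
    (hi : (D.ears.get i).IsShort) (hj : (D.ears.get j).IsShort)
    (u : V) (hu : u ∈ (D.ears.get i).internal) (v : V) (hv : v ∈ (D.ears.get j).internal) :
    ¬G.Adj u v := by
  have hpair : D.ears.Pairwise fun P Q => P.IsShort → Q.IsShort →
      ∀ u ∈ P.inner, ∀ v ∈ Q.inner, ¬G.Adj u v := by
    have hBshort (P) (hP : P ∈ B) := Ear.not_isShort_of_three_le (hB P hP)
    have hTshort (P) (hP : P ∈ T) := Ear.not_isShort_of_inner_eq_nil (hT P hP)
    rw [hD, List.append_assoc, List.pairwise_append, List.pairwise_append]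
    exact ⟨List.pairwise_of_forall_mem_list fun P hP _ _ hshort => (hBshort P hP hshort).elim,
      ⟨hS.imp fun hPQ _ _ => hPQ,
        List.pairwise_of_forall_mem_list fun P hP _ _ hshort => (hTshort P hP hshort).elim,
        fun _ _ Q hQ _ hshort => (hTshort Q hQ hshort).elim⟩,
      fun P hP _ _ hshort => (hBshort P hP hshort).elim⟩
  rw [List.pairwise_iff_get] at hpair
  rw [Ear.mem_internal] at hu hv
  rcases hij.lt_or_gt with hlt | hlt
  · exact hpair i j hlt hi hj u hu v hv
  · exact fun huv => hpair j i hlt hj hi v hv u hu huv.symm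

end EarDecomp

theorem evenCount_eq_zero (hT : ∀ P ∈ T, P.inner = []) : evenCount T = 0 :=
  List.countP_eq_zero.2 fun P hP => by simp [P.walk_length, hT P hP]

theorem IsNiceFamily.exists_earDecomp_isNice [Finite V] {C : Ear G} {A : List (Ear G)}
    (hC : C.IsOver True {C.a}) (hClong : 3 ≤ C.inner.length)
    (hA : IsEarSeq False ({C.a} ∪ {v | v ∈ C.inner}) A) (hAlong : ∀ P ∈ A, 3 ≤ P.inner.length)
    (hS : IsNiceFamily ({C.a} ∪ {v | v ∈ C.inner} ∪ {v | v ∈ innerVerts A}) S) :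
    ∃ D : EarDecomp G, D.IsNice ∧ D.evenEars = evenCount (C :: A ++ S) := by
  have hlong : ∀ P ∈ C :: A, 3 ≤ P.inner.length := List.forall_mem_cons.2 ⟨hClong, hAlong⟩
  have hCA : IsEarSeq True {C.a} (C :: A) := isEarSeq_cons.2 ⟨hC, hA.imp False.elim⟩
  rw [← union_innerVerts_cons] at hS
  have hSseq := hS.isEarSeq subset_rfl fun x => hS.notMem
  have hseq : IsEarSeq True {C.a} (C :: A ++ S) :=
    isEarSeq_append.2 ⟨hCA, hSseq.imp False.elim⟩
  have hne : ∀ P ∈ C :: A ++ S, P.inner ≠ [] := by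
    rintro P hP hnil
    rcases List.mem_append.1 hP with hP | hP
    · have := hlong P hP
      simp [hnil] at this
    · have := P.isShort_iff.1 (hS.isShort P hP)
      simp [hnil] at this
  have hcover : ({C.a} : Set V) ∪ {v | v ∈ innerVerts (C :: A ++ S)} = Set.univ := by
    rw [innerVerts_append]
    refine Set.eq_univ_of_forall fun v => (hS.cover v).elim (.imp_right (List.mem_append_left _)) ?_
    exact fun hv => .inr (List.mem_append_right _ hv)
  obtain ⟨D, T, hD, hT⟩ := hseq.exists_earDecomp hcover hne
  have hopen : D.IsOpen := by
    refine EarDecomp.isOpen_of_ears_eq_cons (C := C) (R := A ++ S ++ T) (by simp [hD]) ?_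
    intro P hP
    rcases List.mem_append.1 hP with hP | hP
    · exact (List.mem_append.1 hP).elim hA.isOpen hSseq.isOpen
    · exact Ear.isOpen_of_inner_eq_nil (hT P hP)
  have heven : evenCount D.ears = evenCount (C :: A ++ S) := by
    rw [hD, evenCount_append, evenCount_eq_zero hT, Nat.add_zero]
  exact ⟨D, ⟨hopen,
    EarDecomp.isPendant_of_isShort hD hlong (fun P => hCA.ends_mem) hS.toIsShortFamily hT,
    EarDecomp.not_adj_of_isShort hD hlong hS.pairwise_not_adj hT⟩, heven⟩

theorem BuiltFrom.exists_earDecomp_isNice [Finite V] {r : V}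
    (hcon : ∀ v, (G.induce ({v}ᶜ : Set V)).Connected)
    (hthird : ∀ v s t, ∃ x, G.Adj v x ∧ x ≠ s ∧ x ≠ t) (h : BuiltFrom G True Set.univ {r} m) :
    ∃ D : EarDecomp G, D.IsNice ∧ D.evenEars ≤ m := by
  obtain ⟨p, L, k, hL, hlong, hk, hle⟩ := exists_long_cycle hcon hthird h
  obtain ⟨C, rfl, rfl, hCb⟩ := hL.exists_ear
  obtain ⟨A, S, hA, hAlong, hS, hAS⟩ := exists_long_isEarSeq_isNiceFamily hthird hk
  obtain ⟨D, hD, heven⟩ := hS.exists_earDecomp_isNice (by rwa [Ear.IsOver, hCb]) hlong hA hAlong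
  refine ⟨D, hD, ?_⟩
  rw [heven, evenCount_append, evenCount_cons]
  omega

end Nice

theorem exists_adj_ne_ne_of_three_le_degree [Fintype V] {G : SimpleGraph V} [DecidableRel G.Adj]
    {v : V} (hv : 3 ≤ G.degree v) (s t : V) : ∃ x, G.Adj v x ∧ x ≠ s ∧ x ≠ t := by
  classical
  have hcard : ({s, t} : Finset V).card < (G.neighborFinset v).card :=
    Finset.card_le_two.trans_lt (by rwa [G.card_neighborFinset_eq_degree])
  obtain ⟨x, hx, hxst⟩ := Finset.exists_mem_notMem_of_card_lt_card hcard
  exact ⟨x, (G.mem_neighborFinset v x).1 hx, by simpa using hxst⟩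

/-- Theorem 2. Every 2-vertex-connected simple graph of minimum degree
at least `3` has a nice ear-decomposition with exactly `φ(G)` even ears. -/
theorem statement_5 {V : Type*} [Fintype V] [DecidableEq V] (G : SimpleGraph V)
    [DecidableRel G.Adj]
    (h2 : TwoVertexConnected G) (hdeg : ∀ v : V, 3 ≤ G.degree v) :
    ∃ D : EarDecomp G, D.IsNice ∧ D.evenEars = phi G := by
  obtain ⟨hcard, hcon⟩ := h2
  have hthird (v s t : V) : ∃ x, G.Adj v x ∧ x ≠ s ∧ x ≠ t :=
    exists_adj_ne_ne_of_three_le_degree (hdeg v) s t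
  have hne : {n | ∃ D : EarDecomp G, D.evenEars = n}.Nonempty := by
    obtain ⟨r⟩ : Nonempty V := (Nat.card_pos_iff.1 (by omega)).1
    obtain ⟨t, hrt, -⟩ := hthird r r r
    obtain ⟨y, hry, -, hyt⟩ := hthird r r t
    obtain ⟨m, hm⟩ := exists_builtFrom_singleton hcon hrt hry hyt
    obtain ⟨D, -⟩ := hm.exists_earDecomp_isNice hcon hthird
    exact ⟨_, D, rfl⟩
  obtain ⟨D₀, hD₀⟩ : ∃ D : EarDecomp G, D.evenEars = phi G := Nat.sInf_mem hne
  have hbuilt := D₀.builtFrom fun v => (hthird v v v).imp fun _ => And.left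
  obtain ⟨D, hD, hle⟩ := hbuilt.exists_earDecomp_isNice hcon hthird
  exact ⟨D, hD, (hle.trans_eq hD₀).antisymm (Nat.sInf_le ⟨D, rfl⟩)⟩
end

section
/- Let D be an open ear-decomposition of a 2-vertex-connected graph G with exactly φ(G) even ears in which all short ears are pendant. Then no edge of G joins the internal vertex of one 2-ear of D to the internal vertex of another 2-ear of D. -/
open SimpleGraph

variable {V : Type*}

/-!
Suppose an edge `u v` joins the internal vertices of two pendant 2-ears `a u b` and `c v d`. Trivial
ears can be postponed to the end of an ear-decomposition, and pendant ears can be postponed until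
just before them, since no other nontrivial ear is attached to their internal vertices. In this
order both 2-ears are attached to the same vertex set, and `u v` is a trivial ear. Trading the
two 2-ears and `u v` for the 3-ear `a u v c` and the trivial ears `u b` and `v d` yields an
ear-decomposition with two even ears fewer, which contradicts the minimality of `φ(G)`. The new
3-ear is closed when `a = c`, which is harmless because `φ(G)` is a minimum over all
ear-decompositions, not only the open ones.
-/

namespace Ear

variable {G : SimpleGraph V} {P : Ear G}

theorem endpoints_subset_vertices (P : Ear G) : P.endpoints ⊆ P.vertices := by
  rintro v (rfl | rfl)
  · exact P.walk.start_mem_support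
  · exact P.walk.end_mem_support

theorem disjoint_endpoints_internal (P : Ear G) : Disjoint P.endpoints P.internal :=
  Set.disjoint_sdiff_right

theorem endpoints_union_internal (P : Ear G) : P.endpoints ∪ P.internal = P.vertices :=
  Set.union_sdiff_cancel P.endpoints_subset_vertices

theorem edges_nodup (P : Ear G) : P.edges.Nodup := by
  obtain ⟨a, b, w, -, ⟨-, hpath⟩ | ⟨rfl, hcycle⟩⟩ := P
  · exact hpath.isTrail.edges_nodup
  · exact hcycle.isTrail.edges_nodup

theorem edges_ne_nil (P : Ear G) : P.edges ≠ [] := by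
  rw [← List.length_pos_iff, edges, Walk.length_edges]
  exact P.length_pos

theorem left_mem_vertices_of_mem_edges {x y : V} (h : s(x, y) ∈ P.edges) : x ∈ P.vertices :=
  P.walk.fst_mem_support_of_mem_edges h

theorem right_mem_vertices_of_mem_edges {x y : V} (h : s(x, y) ∈ P.edges) : y ∈ P.vertices :=
  P.walk.snd_mem_support_of_mem_edges h

theorem IsTrivial.endpoints_eq_vertices (hP : P.IsTrivial) : P.endpoints = P.vertices := by
  obtain ⟨a, b, w, hpos, hear⟩ := P
  match w, hpos, hear, hP with
  | .cons _ .nil, _, _, _ => ext; simp [endpoints, vertices]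

theorem IsTrivial.internal_eq_empty (hP : P.IsTrivial) : P.internal = ∅ := by
  rw [internal, hP.endpoints_eq_vertices, sdiff_self, Set.bot_eq_empty]

theorem IsTrivial.edges_eq_of_mem {e : Sym2 V} (hP : P.IsTrivial) (he : e ∈ P.edges) :
    P.edges = [e] := by
  have hlen : P.edges.length = 1 := (Walk.length_edges _).trans hP
  obtain ⟨f, hf⟩ := List.length_eq_one_iff.1 hlen
  rw [hf] at he ⊢
  rw [List.mem_singleton.1 he]

theorem IsTrivial.vertices_eq_of_mem_edges {x y : V} (hP : P.IsTrivial)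
    (hxy : s(x, y) ∈ P.edges) : P.vertices = {x, y} := by
  have hends : s(P.a, P.b) ∈ P.edges := by
    obtain ⟨a, b, w, hpos, hear⟩ := P
    match w, hpos, hear, hP with
    | .cons _ .nil, _, _, _ => exact List.mem_singleton_self _
  rw [hP.edges_eq_of_mem hxy, List.mem_singleton] at hends
  rw [← hP.endpoints_eq_vertices, endpoints, ← Sym2.coe_mk, hends, Sym2.coe_mk]

theorem exists_adj_of_length_eq_two (hP : P.walk.length = 2) {u : V} (hu : u ∈ P.internal) :
    ∃ a b, G.Adj a u ∧ G.Adj u b ∧ P.edges = [s(a, u), s(u, b)] ∧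
      P.endpoints = {a, b} ∧ P.vertices = {a, u, b} := by
  obtain ⟨a, b, w, hpos, hear⟩ := P
  match w, hpos, hear, hP, hu with
  | .cons (v := x) hax (.cons hxb .nil), _, _, _, hu =>
    obtain rfl : u = x := by
      simp only [internal, vertices, endpoints, Set.mem_sdiff, Set.mem_ofPred_eq,
        Walk.support_cons, Walk.support_nil, List.mem_cons, List.not_mem_nil, or_false,
        Set.mem_insert_iff, Set.mem_singleton_iff] at hu
      tauto
    exact ⟨a, b, hax, hxb, rfl, rfl, by ext; simp [vertices]⟩

end Ear

section EarSequence

variable {G : SimpleGraph V} {S : Set V} {P Q : Ear G} {L N K K' M : List (Ear G)}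

/-- The set of vertices lying on some ear of the list `L`. -/
def earVerts (L : List (Ear G)) : Set V := {v | ∃ P ∈ L, v ∈ P.vertices}

@[simp] theorem earVerts_nil : earVerts ([] : List (Ear G)) = ∅ := by
  simp [earVerts]

@[simp] theorem earVerts_cons : earVerts (P :: L) = P.vertices ∪ earVerts L := by
  ext; simp [earVerts]

theorem vertices_subset_earVerts (hP : P ∈ L) : P.vertices ⊆ earVerts L :=
  fun _ hv => ⟨P, hP, hv⟩

theorem priorVerts_eq_union_earVerts_take (root : V) (L : List (Ear G)) (i : ℕ) :
    priorVerts root L i = {root} ∪ earVerts (L.take i) := by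
  ext v
  simp only [priorVerts, earVerts, Set.mem_insert_iff, Set.mem_union, Set.mem_singleton_iff,
    Set.mem_ofPred_eq, List.mem_take_iff_getElem, lt_min_iff]
  constructor
  · rintro (h | ⟨j, hj, hv⟩)
    · exact .inl h
    · exact .inr ⟨_, ⟨j, ⟨hj, j.2⟩, rfl⟩, hv⟩
  · rintro (h | ⟨_, ⟨j, ⟨hj, hj'⟩, rfl⟩, hv⟩)
    · exact .inl h
    · exact .inr ⟨⟨j, hj'⟩, hj, hv⟩

/-- The ear `P` shares exactly its endpoints with the vertex set `S`. -/
def Ear.AttachesTo (P : Ear G) (S : Set V) : Prop :=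
  P.endpoints ⊆ S ∧ Disjoint P.internal S

theorem Ear.AttachesTo.notMem_of_mem_internal (hP : P.AttachesTo S) {u : V}
    (hu : u ∈ P.internal) : u ∉ S :=
  hP.2.notMem_of_mem_left hu

/-- The ears of the list can be attached to `S` one after the other. An ear-decomposition is such a
sequence starting from `S = {root}`, together with the condition on the edges. -/
def IsEarSequence : Set V → List (Ear G) → Prop
  | _, [] => True
  | S, P :: L => P.AttachesTo S ∧ IsEarSequence (S ∪ P.vertices) L

theorem isEarSequence_iff_forall_get : IsEarSequence S L ↔
    ∀ i : Fin L.length, (L.get i).AttachesTo (S ∪ earVerts (L.take i)) := by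
  induction L generalizing S with
  | nil => simp [IsEarSequence]
  | cons P L ih =>
    refine Iff.trans ?_ (Fin.forall_fin_succ (n := L.length)).symm
    simp [IsEarSequence, ih, Set.union_assoc]

theorem isEarSequence_append :
    IsEarSequence S (N ++ M) ↔ IsEarSequence S N ∧ IsEarSequence (S ∪ earVerts N) M := by
  induction N generalizing S with
  | nil => simp [IsEarSequence]
  | cons P N ih => simp only [List.cons_append, IsEarSequence, ih, earVerts_cons, and_assoc,
      Set.union_assoc]

theorem IsEarSequence.replace (h : IsEarSequence S (N ++ (K ++ M)))
    (hK' : IsEarSequence (S ∪ earVerts N) K')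
    (hverts : S ∪ earVerts N ∪ earVerts K' = S ∪ earVerts N ∪ earVerts K) :
    IsEarSequence S (N ++ (K' ++ M)) := by
  rw [isEarSequence_append, isEarSequence_append] at h ⊢
  exact ⟨h.1, hK', hverts ▸ h.2.2⟩

theorem isEarSequence_iff_of_isTrivial (hL : ∀ P ∈ L, P.IsTrivial) :
    IsEarSequence S L ↔ ∀ P ∈ L, P.endpoints ⊆ S := by
  induction L with
  | nil => simp [IsEarSequence]
  | cons P L ih =>
    obtain ⟨hP, hL⟩ := List.forall_mem_cons.1 hL
    rw [IsEarSequence, Ear.AttachesTo, hP.internal_eq_empty, List.forall_mem_cons,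
      and_iff_left (Set.empty_disjoint S)]
    refine and_congr_right fun hPS => ?_
    rw [← hP.endpoints_eq_vertices, Set.union_eq_left.2 hPS, ih hL]

theorem Ear.AttachesTo.of_union_vertices (hPS : P.AttachesTo S)
    (hQ : Q.AttachesTo (S ∪ P.vertices)) (hQP : Disjoint Q.endpoints P.internal) :
    Q.AttachesTo S ∧ P.AttachesTo (S ∪ Q.vertices) := by
  have hunion : S ∪ P.vertices = S ∪ P.internal := by
    rw [← P.endpoints_union_internal, ← Set.union_assoc, Set.union_eq_left.2 hPS.1]
  have hQint : Disjoint P.internal Q.internal :=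
    (hQ.2.mono_right (Set.sdiff_subset.trans Set.subset_union_right)).symm
  refine ⟨⟨?_, hQ.2.mono_right Set.subset_union_left⟩, hPS.1.trans Set.subset_union_left, ?_⟩
  · exact hQP.subset_left_of_subset_union (hunion ▸ hQ.1)
  · rw [← Q.endpoints_union_internal, Set.disjoint_union_right, Set.disjoint_union_right]
    exact ⟨hPS.2, hQP.symm, hQint⟩

theorem IsEarSequence.cons_append_comm (h : IsEarSequence S (P :: (N ++ M)))
    (hN : ∀ Q ∈ N, Disjoint Q.endpoints P.internal) : IsEarSequence S (N ++ P :: M) := by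
  induction N generalizing S with
  | nil => exact h
  | cons Q N ih =>
    obtain ⟨hQN, hN⟩ := List.forall_mem_cons.1 hN
    obtain ⟨hP, hQ, hNM⟩ := h
    obtain ⟨hQ, hP⟩ := hP.of_union_vertices hQ hQN
    exact ⟨hQ, ih ⟨hP, Set.union_right_comm S _ _ ▸ hNM⟩ hN⟩

theorem IsEarSequence.exists_perm_append_trivial (h : IsEarSequence S L) :
    ∃ N M, (N ++ M).Perm L ∧ IsEarSequence S (N ++ M) ∧
      (∀ P ∈ N, ¬ P.IsTrivial) ∧ ∀ P ∈ M, P.IsTrivial := by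
  induction L generalizing S with
  | nil => exact ⟨[], [], by simp [IsEarSequence]⟩
  | cons P L ih =>
    obtain ⟨N, M, hperm, hseq, hN, hM⟩ := ih h.2
    by_cases hP : P.IsTrivial
    · refine ⟨N, P :: M, List.perm_middle.trans (hperm.cons P), ?_, hN,
        List.forall_mem_cons.2 ⟨hP, hM⟩⟩
      refine IsEarSequence.cons_append_comm ⟨h.1, hseq⟩ fun Q _ => ?_
      rw [hP.internal_eq_empty]
      exact Set.disjoint_empty _
    · exact ⟨P :: N, M, hperm.cons P, ⟨h.1, hseq⟩, List.forall_mem_cons.2 ⟨hP, hN⟩, hM⟩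

theorem IsEarSequence.exists_perm_append_cons (h : IsEarSequence S (K ++ M)) (hP : P ∈ K)
    (hK : ∀ Q ∈ K, Disjoint Q.endpoints P.internal) :
    ∃ N, (P :: N).Perm K ∧ IsEarSequence S (N ++ P :: M) := by
  obtain ⟨A, B, rfl⟩ := List.append_of_mem hP
  have hB : ∀ Q ∈ B, Disjoint Q.endpoints P.internal :=
    fun Q hQ => hK Q (List.mem_append_right _ (List.mem_cons_of_mem _ hQ))
  refine ⟨A ++ B, List.perm_middle.symm, ?_⟩
  rw [List.append_assoc, isEarSequence_append] at h ⊢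
  exact ⟨h.1, h.2.cons_append_comm hB⟩

theorem IsEarSequence.exists_perm_append_pair (h : IsEarSequence S L)
    (hPL : P ∈ L) (hQL : Q ∈ L) (hPQ : P ≠ Q) (hP : ¬ P.IsTrivial) (hQ : ¬ Q.IsTrivial)
    (hPpend : ∀ R ∈ L, ¬ R.IsTrivial → Disjoint R.endpoints P.internal)
    (hQpend : ∀ R ∈ L, ¬ R.IsTrivial → Disjoint R.endpoints Q.internal) :
    ∃ N M, (N ++ Q :: P :: M).Perm L ∧ IsEarSequence S (N ++ Q :: P :: M) ∧
      ∀ R ∈ M, R.IsTrivial := by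
  obtain ⟨K, M, hperm, hseq, hK, hM⟩ := h.exists_perm_append_trivial
  have hKL : ∀ R ∈ K, R ∈ L := fun R hR => hperm.subset (List.mem_append_left _ hR)
  have mem_K : ∀ R ∈ L, ¬ R.IsTrivial → R ∈ K := fun R hR hR' =>
    (List.mem_append.1 (hperm.symm.subset hR)).resolve_right fun hRM => hR' (hM R hRM)
  obtain ⟨K', hpermP, hseqP⟩ := hseq.exists_perm_append_cons (mem_K P hPL hP)
    fun R hR => hPpend R (hKL R hR) (hK R hR)
  have hK'K : ∀ R ∈ K', R ∈ K := fun R hR => hpermP.subset (List.mem_cons_of_mem _ hR)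
  have hQK' : Q ∈ K' :=
    (List.mem_cons.1 (hpermP.symm.subset (mem_K Q hQL hQ))).resolve_left hPQ.symm
  obtain ⟨N, hpermQ, hseqQ⟩ := hseqP.exists_perm_append_cons hQK'
    fun R hR => hQpend R (hKL R (hK'K R hR)) (hK R (hK'K R hR))
  refine ⟨N, M, ?_, hseqQ, hM⟩
  calc
    List.Perm (N ++ Q :: P :: M) (Q :: P :: N ++ M) := List.perm_append_comm_assoc N [Q, P] M
    List.Perm _ (P :: Q :: N ++ M) := .swap ..
    List.Perm _ (K ++ M) := ((hpermQ.cons P).trans hpermP).append_right M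
    List.Perm _ L := hperm

theorem existsUnique_mem_edges_iff_count_eq_one [DecidableEq V] (e : Sym2 V) :
    (∃! i : Fin L.length, e ∈ (L.get i).edges) ↔ (L.flatMap Ear.edges).count e = 1 := by
  rw [Fintype.existsUnique_iff_card_one, Finset.card_filter, List.count_flatMap,
    ← Fin.sum_univ_fun_getElem]
  simp only [Function.comp_apply, (Ear.edges_nodup _).count, List.get_eq_getElem]

end EarSequence

section ThreeEar

variable {G : SimpleGraph V} {S : Set V} {a u v c : V}

/-- The ear `a u v c` with three edges; it is closed, i.e. a triangle, when `a = c`. -/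
def threeEar (hau : G.Adj a u) (huv : G.Adj u v) (hvc : G.Adj v c) (hav : a ≠ v) (huc : u ≠ c) :
    Ear G where
  a := a
  b := c
  walk := .cons hau (.cons huv (.cons hvc .nil))
  length_pos := by simp
  ear := by
    have := hau.ne
    have := huv.ne
    have := hvc.ne
    by_cases hac : a = c
    · subst hac
      refine .inr ⟨rfl, ?_⟩
      rw [Walk.copy_rfl_rfl, Walk.cons_isCycle_iff]
      simp [*, eq_comm]
    · exact .inl ⟨hac, by simp [*]⟩

variable (hau : G.Adj a u) (huv : G.Adj u v) (hvc : G.Adj v c) (hav : a ≠ v) (huc : u ≠ c)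

theorem threeEar_vertices : (threeEar hau huv hvc hav huc).vertices = {a, u, v, c} := by
  ext
  simp [Ear.vertices, threeEar]

theorem threeEar_attachesTo (ha : a ∈ S) (hu : u ∉ S) (hv : v ∉ S) (hc : c ∈ S) :
    (threeEar hau huv hvc hav huc).AttachesTo S := by
  refine ⟨Set.pair_subset ha hc, Set.disjoint_left.2 ?_⟩
  rintro x ⟨hx, hx'⟩
  rw [threeEar_vertices] at hx
  rcases hx with rfl | rfl | rfl | rfl
  · exact absurd (.inl rfl) hx'
  · exact hu
  · exact hv
  · exact absurd (.inr rfl) hx'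

theorem union_threeEar_vertices (ha : a ∈ S) (hc : c ∈ S) :
    S ∪ (threeEar hau huv hvc hav huc).vertices = S ∪ {u, v} := by
  rw [threeEar_vertices]
  grind

end ThreeEar

section Exchange

variable {G : SimpleGraph V} {S : Set V} {P Q R : Ear G} {N M : List (Ear G)} {u v : V}

theorem Ear.AttachesTo.union_vertices_of_length_eq_two (hP : P.AttachesTo S)
    (hlen : P.walk.length = 2) (hu : u ∈ P.internal) : S ∪ P.vertices = insert u S := by
  obtain ⟨a, b, -, -, -, hends, hverts⟩ := Ear.exists_adj_of_length_eq_two hlen hu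
  have hS : {a, b} ⊆ S := hends ▸ hP.1
  rw [Set.pair_subset_iff] at hS
  rw [hverts, Set.insert_comm, Set.union_insert, Set.union_eq_left.2 (Set.pair_subset hS.1 hS.2)]

theorem union_earVerts_eq_union_pair (hP : P.AttachesTo S) (hQ : Q.AttachesTo S)
    (hPlen : P.walk.length = 2) (hQlen : Q.walk.length = 2)
    (hu : u ∈ P.internal) (hv : v ∈ Q.internal) (hR : R.IsTrivial) (hRuv : s(u, v) ∈ R.edges) :
    S ∪ earVerts [Q, P, R] = S ∪ {u, v} := by
  have hSP := hP.union_vertices_of_length_eq_two hPlen hu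
  have hSQ := hQ.union_vertices_of_length_eq_two hQlen hv
  calc
    S ∪ earVerts [Q, P, R] = (S ∪ Q.vertices) ∪ (S ∪ P.vertices) ∪ R.vertices := by
      rw [earVerts_cons, earVerts_cons, earVerts_cons, earVerts_nil, Set.union_empty,
        ← Set.union_union_distrib_left]
      simp only [Set.union_assoc]
    _ = insert v S ∪ insert u S ∪ {u, v} := by
      rw [hSQ, hSP, hR.vertices_eq_of_mem_edges hRuv]
    _ = S ∪ {u, v} := by grind

/-- If `P` is `a u b` and `Q` is `c v d`, take for `T` the 3-ear `a u v c` and for `B` and `C` the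
edges `u b` and `v d`. -/
theorem exists_threeEar_exchange (hP : P.AttachesTo S) (hQ : Q.AttachesTo S)
    (hPlen : P.walk.length = 2) (hQlen : Q.walk.length = 2)
    (hu : u ∈ P.internal) (hv : v ∈ Q.internal) (huv : G.Adj u v) :
    ∃ T B C : Ear G, T.walk.length = 3 ∧ B.IsTrivial ∧ C.IsTrivial ∧
      IsEarSequence S [T, B, C] ∧ S ∪ earVerts [T, B, C] = S ∪ {u, v} ∧
      ([T, B, C].flatMap Ear.edges).Perm (Q.edges ++ P.edges ++ [s(u, v)]) := by
  have huS := hP.notMem_of_mem_internal hu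
  have hvS := hQ.notMem_of_mem_internal hv
  obtain ⟨a, b, hau, hub, hPedges, hPends, -⟩ := Ear.exists_adj_of_length_eq_two hPlen hu
  obtain ⟨c, d, hcv, hvd, hQedges, hQends, -⟩ := Ear.exists_adj_of_length_eq_two hQlen hv
  obtain ⟨haS, hbS⟩ := Set.pair_subset_iff.1 (hPends ▸ hP.1)
  obtain ⟨hcS, hdS⟩ := Set.pair_subset_iff.1 (hQends ▸ hQ.1)
  have hav : a ≠ v := fun h => hvS (h ▸ haS)
  have huc : u ≠ c := fun h => huS (h ▸ hcS)
  let T := threeEar hau huv hcv.symm hav huc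
  have hT : T.AttachesTo S := threeEar_attachesTo _ _ _ _ _ haS huS hvS hcS
  have hTverts : S ∪ T.vertices = S ∪ {u, v} := union_threeEar_vertices _ _ _ _ _ haS hcS
  let B := trivialEar G hub
  let C := trivialEar G hvd
  have hB : B.IsTrivial := rfl
  have hC : C.IsTrivial := rfl
  have hBends : B.endpoints ⊆ S ∪ {u, v} := Set.pair_subset (.inr (.inl rfl)) (.inl hbS)
  have hCends : C.endpoints ⊆ S ∪ {u, v} := Set.pair_subset (.inr (.inr rfl)) (.inl hdS)
  refine ⟨T, B, C, rfl, hB, hC, ⟨hT, ?_⟩, ?_, ?_⟩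
  · rw [hTverts, isEarSequence_iff_of_isTrivial (by simp [hB, hC])]
    simp only [List.forall_mem_cons, hBends, hCends, List.not_mem_nil, IsEmpty.forall_iff,
      implies_true, and_self]
  · rw [earVerts_cons, ← Set.union_assoc, hTverts, Set.union_eq_left]
    simp only [earVerts_cons, earVerts_nil, Set.union_empty, ← hB.endpoints_eq_vertices,
      ← hC.endpoints_eq_vertices, Set.union_subset hBends hCends]
  · change List.Perm [s(a, u), s(u, v), s(v, c), s(u, b), s(v, d)] _
    classical
    rw [hPedges, hQedges, Sym2.eq_swap (a := v) (b := c), List.perm_iff_count]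
    intro e
    simp only [List.cons_append, List.nil_append, List.count_cons, List.count_nil]
    omega

theorem Ear.AttachesTo.notMem_vertices_of_length_eq_two (hP : P.AttachesTo S)
    (hQ : Q.AttachesTo S) (hQlen : Q.walk.length = 2) (hu : u ∈ P.internal) (hv : v ∈ Q.internal)
    (huv : u ≠ v) : u ∉ Q.vertices := by
  intro huQ
  have huS : u ∈ insert v S :=
    hQ.union_vertices_of_length_eq_two hQlen hv ▸ Set.mem_union_right S huQ
  exact huS.elim huv (hP.notMem_of_mem_internal hu)

theorem mem_tail_of_edge_mem (hN : earVerts N ⊆ S) (hP : P.AttachesTo S) (hQ : Q.AttachesTo S)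
    (hPlen : P.walk.length = 2) (hQlen : Q.walk.length = 2)
    (hu : u ∈ P.internal) (hv : v ∈ Q.internal) (huv : u ≠ v)
    (hR : R ∈ N ++ Q :: P :: M) (hRuv : s(u, v) ∈ R.edges) : R ∈ M := by
  have huR := Ear.left_mem_vertices_of_mem_edges hRuv
  have hvR := Ear.right_mem_vertices_of_mem_edges hRuv
  have hRN : R ∉ N := fun h =>
    hP.notMem_of_mem_internal hu (hN (vertices_subset_earVerts h huR))
  have hRQ : R ≠ Q := fun h =>
    hP.notMem_vertices_of_length_eq_two hQ hQlen hu hv huv (h ▸ huR)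
  have hRP : R ≠ P := fun h =>
    hQ.notMem_vertices_of_length_eq_two hP hPlen hv hu huv.symm (h ▸ hvR)
  simpa [hRN, hRQ, hRP] using hR

end Exchange

namespace EarDecomp

variable {G : SimpleGraph V}

theorem isEarSequence (D : EarDecomp G) : IsEarSequence {D.root} D.ears := by
  rw [isEarSequence_iff_forall_get]
  intro i
  rw [← priorVerts_eq_union_earVerts_take]
  exact ⟨D.endpoints_sub i, Set.disjoint_iff_inter_eq_empty.2 (D.internal_new i)⟩

theorem get_injective (D : EarDecomp G) : Function.Injective D.ears.get := by
  intro i j hij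
  obtain ⟨e, he⟩ := List.exists_mem_of_ne_nil _ (D.ears.get i).edges_ne_nil
  exact (D.edge_cover e ((D.ears.get i).walk.edges_subset_edgeSet he)).unique he (hij ▸ he)

theorem IsPendant.disjoint_endpoints_internal {D : EarDecomp G} {i : Fin D.ears.length}
    (hi : D.IsPendant i) {R : Ear G} (hR : R ∈ D.ears) (hR' : ¬ R.IsTrivial) :
    Disjoint R.endpoints (D.ears.get i).internal := by
  obtain ⟨j, rfl⟩ := List.get_of_mem hR
  by_cases hji : j = i
  · rw [hji]
    exact Ear.disjoint_endpoints_internal _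
  · obtain ⟨ha, hb⟩ := hi.2 j hji hR'
    rw [Set.disjoint_left]
    rintro x (rfl | rfl) <;> assumption

theorem exists_ears_eq (D : EarDecomp G) {L : List (Ear G)} (hL : IsEarSequence {D.root} L)
    (hedges : (L.flatMap Ear.edges).Perm (D.ears.flatMap Ear.edges)) :
    ∃ D' : EarDecomp G, D'.ears = L := by
  classical
  rw [isEarSequence_iff_forall_get] at hL
  simp only [← priorVerts_eq_union_earVerts_take] at hL
  refine ⟨⟨D.root, L, fun i => (hL i).1, fun i => (hL i).2.inter_eq, fun e he => ?_⟩, rfl⟩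
  rw [existsUnique_mem_edges_iff_count_eq_one, hedges.count_eq,
    ← existsUnique_mem_edges_iff_count_eq_one]
  exact D.edge_cover e he

theorem exists_evenEars_of_replace (D : EarDecomp G) {N K K' M : List (Ear G)}
    (hperm : (N ++ (K ++ M)).Perm D.ears) (hseq : IsEarSequence {D.root} (N ++ (K ++ M)))
    (hK' : IsEarSequence ({D.root} ∪ earVerts N) K')
    (hverts : {D.root} ∪ earVerts N ∪ earVerts K' = {D.root} ∪ earVerts N ∪ earVerts K)
    (hedges : (K'.flatMap Ear.edges).Perm (K.flatMap Ear.edges)) :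
    ∃ D' : EarDecomp G, D'.evenEars + K.countP (fun P => Even P.walk.length) =
      D.evenEars + K'.countP (fun P => Even P.walk.length) := by
  have hedges' : ((N ++ (K' ++ M)).flatMap Ear.edges).Perm (D.ears.flatMap Ear.edges) := by
    refine .trans ?_ (hperm.flatMap_right _)
    simpa only [List.flatMap_append] using (hedges.append_right _).append_left _
  obtain ⟨D', hD'⟩ := D.exists_ears_eq (hseq.replace hK' hverts) hedges'
  refine ⟨D', ?_⟩
  rw [evenEars, evenEars, hD', ← hperm.countP_eq]
  simp only [List.countP_append]
  omega

theorem exists_perm_isEarSequence_of_adj (D : EarDecomp G) {i j : Fin D.ears.length} (hij : i ≠ j)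
    (hi : D.IsPendant i) (hj : D.IsPendant j)
    (hilen : (D.ears.get i).walk.length = 2) (hjlen : (D.ears.get j).walk.length = 2)
    {u v : V} (hu : u ∈ (D.ears.get i).internal) (hv : v ∈ (D.ears.get j).internal)
    (huv : G.Adj u v) :
    ∃ (N M : List (Ear G)) (R : Ear G), R.IsTrivial ∧ s(u, v) ∈ R.edges ∧
      (D.ears.get i).AttachesTo ({D.root} ∪ earVerts N) ∧
      (D.ears.get j).AttachesTo ({D.root} ∪ earVerts N) ∧
      (N ++ ([D.ears.get j, D.ears.get i, R] ++ M)).Perm D.ears ∧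
      IsEarSequence {D.root} (N ++ ([D.ears.get j, D.ears.get i, R] ++ M)) := by
  set P := D.ears.get i
  set Q := D.ears.get j
  obtain ⟨N, M, hperm, hseq, hM⟩ := D.isEarSequence.exists_perm_append_pair
    (List.get_mem _ _) (List.get_mem _ _) (D.get_injective.ne hij) hi.1 hj.1
    (fun _ => hi.disjoint_endpoints_internal) (fun _ => hj.disjoint_endpoints_internal)
  obtain ⟨hN, hQ, hP, hMseq⟩ := isEarSequence_append.1 hseq
  obtain ⟨hPN, -⟩ := hQ.of_union_vertices hP
    (hj.disjoint_endpoints_internal (List.get_mem _ _) hi.1)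
  obtain ⟨k, hk, -⟩ := D.edge_cover s(u, v) huv
  set R := D.ears.get k
  have hRM : R ∈ M := mem_tail_of_edge_mem Set.subset_union_right hPN hQ hilen hjlen hu hv
    huv.ne (hperm.symm.subset (List.get_mem _ _)) hk
  obtain ⟨A, B, rfl⟩ := List.append_of_mem hRM
  have hRfront : (R :: (A ++ B)).Perm (A ++ R :: B) := List.perm_middle.symm
  refine ⟨N, A ++ B, R, hM R hRM, hk, hPN, hQ, ?_, isEarSequence_append.2 ⟨hN, hQ, hP, ?_⟩⟩
  · exact ((hRfront.append_left [Q, P]).append_left N).trans hperm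
  · rw [isEarSequence_iff_of_isTrivial hM] at hMseq
    exact (isEarSequence_iff_of_isTrivial fun E hE => hM E (hRfront.subset hE)).2
      fun E hE => hMseq E (hRfront.subset hE)

theorem exists_evenEars_add_two_eq (D : EarDecomp G) {i j : Fin D.ears.length} (hij : i ≠ j)
    (hi : D.IsPendant i) (hj : D.IsPendant j)
    (hilen : (D.ears.get i).walk.length = 2) (hjlen : (D.ears.get j).walk.length = 2)
    {u v : V} (hu : u ∈ (D.ears.get i).internal) (hv : v ∈ (D.ears.get j).internal)
    (huv : G.Adj u v) : ∃ D' : EarDecomp G, D'.evenEars + 2 = D.evenEars := by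
  obtain ⟨N, M, R, hR, hRuv, hP, hQ, hperm, hseq⟩ :=
    D.exists_perm_isEarSequence_of_adj hij hi hj hilen hjlen hu hv huv
  obtain ⟨T, B, C, hTlen, hB, hC, hTBC, hverts, hedges⟩ :=
    exists_threeEar_exchange hP hQ hilen hjlen hu hv huv
  rw [← union_earVerts_eq_union_pair hP hQ hilen hjlen hu hv hR hRuv] at hverts
  rw [← hR.edges_eq_of_mem hRuv] at hedges
  obtain ⟨D', hD'⟩ := D.exists_evenEars_of_replace hperm hseq hTBC hverts
    (by simpa only [List.flatMap_cons, List.flatMap_nil, List.append_nil, List.append_assoc]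
      using hedges)
  rw [Ear.IsTrivial] at hR hB hC
  have not_even_three : ¬ Even 3 := by decide
  simp only [List.countP_cons, List.countP_nil, hilen, hjlen, hR, hTlen, hB, hC, even_two,
    Nat.not_even_one, not_even_three, decide_true, decide_false, if_true, Bool.false_eq_true,
    if_false] at hD'
  exact ⟨D', hD'⟩

end EarDecomp

theorem statement_6_general {G : SimpleGraph V} (D : EarDecomp G) (hmin : D.evenEars = phi G)
    {i j : Fin D.ears.length} (hij : i ≠ j) (hi : D.IsPendant i) (hj : D.IsPendant j)
    (hilen : (D.ears.get i).walk.length = 2) (hjlen : (D.ears.get j).walk.length = 2)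
    {u v : V} (hu : u ∈ (D.ears.get i).internal) (hv : v ∈ (D.ears.get j).internal) :
    ¬ G.Adj u v := by
  intro huv
  obtain ⟨D', hD'⟩ := D.exists_evenEars_add_two_eq hij hi hj hilen hjlen hu hv huv
  have hphi : phi G ≤ D'.evenEars := Nat.sInf_le ⟨D', rfl⟩
  omega

/-- In an open ear-decomposition of a 2-vertex-connected graph with
exactly `φ(G)` even ears in which all short ears are pendant, no edge of `G` joins the
internal vertex of one `2`-ear to the internal vertex of another `2`-ear. -/
theorem statement_6 {V : Type*} [Fintype V] [DecidableEq V] (G : SimpleGraph V)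
    (h2 : TwoVertexConnected G)
    (D : EarDecomp G) (hopen : D.IsOpen) (hmin : D.evenEars = phi G)
    (hpend : ∀ i : Fin D.ears.length, (D.ears.get i).IsShort → D.IsPendant i) :
    ∀ i j : Fin D.ears.length, i ≠ j →
      (D.ears.get i).walk.length = 2 → (D.ears.get j).walk.length = 2 →
      ∀ u ∈ (D.ears.get i).internal, ∀ v ∈ (D.ears.get j).internal, ¬ G.Adj u v := by
  intro i j hij hi hj u hu v hv
  exact statement_6_general D hmin hij (hpend i (.inl hi)) (hpend j (.inl hj)) hi hj hu hv
end

section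
/- Let G be a 2-vertex-connected simple graph with minimum degree at least 3, let D be an open nice ear-decomposition of G with exactly φ(G) even ears, and let M be the eardrum arising from the pendant short ears of D. Let H be the spanning subgraph of G whose edge set is the union of the edge sets of the nontrivial ears of D. Then H is a 2-vertex-connected spanning subgraph of G and |E(H)| ≤ (17/12)·max(L_φ(G), L_µ(G,M)), where L_φ(G) = |V(G)| + φ(G) − 1 and L_µ(G,M) = |V(G)| + |M| − µ(G,M) − 1. -/
open SimpleGraph

variable {V : Type*}

/-!
The edges of the nontrivial ears are counted ear by ear. An ear with `ℓ` edges has `ℓ - 1` internal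
vertices, and apart from the root every vertex is internal to at most one ear, so `L_φ` is at least
the sum of `ℓ - 1 + [ℓ even]` over all ears. The union of the paths of an earmuff is a forest that
avoids the members of `M` it does not use, and a path through `f ∈ M` has `|f| + 1` edges; hence
`L_µ` is at least the sum of `ℓ` over the short ears. Since
`12 ℓ ≤ 15 (ℓ - 1 + [ℓ even]) + 2 ℓ [ℓ short]` for `ℓ ≥ 2`, with equality for `ℓ = 3` and `ℓ = 5`,
the number of edges is at most `(15 L_φ + 2 L_µ) / 12`.

Deleting a vertex `v` cuts an open ear into at most two pieces, each of which still contains an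
endpoint of the ear, and a closed ear into a single piece, so adding nontrivial ears one at a time
keeps the graph connected after the deletion of `v`.
-/

/-! ### Forests -/

theorem card_lt_card_of_isAcyclic {F : SimpleGraph V} (hF : F.IsAcyclic) {W : Finset V}
    (hW : W.Nonempty) {E : Finset (Sym2 V)} (hEF : ↑E ⊆ F.edgeSet) (hEW : E ⊆ W.sym2) :
    E.card < W.card := by
  classical
  have : Nonempty W := hW.to_subtype
  obtain ⟨T, hFT, -, hT⟩ := connected_top.exists_isTree_le_of_le_of_isAcyclic le_top
    (hF.induce (W : Set V))
  have hE : E ⊆ T.edgeFinset.image (Sym2.map Subtype.val) := by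
    intro e he
    induction e with
    | _ x y =>
      obtain ⟨hx, hy⟩ := Finset.mk_mem_sym2_iff.1 (hEW he)
      have hadj : F.Adj x y := hEF he
      exact Finset.mem_image.2 ⟨s(⟨x, hx⟩, ⟨y, hy⟩), mem_edgeFinset.2 (hFT hadj), rfl⟩
  calc E.card < T.edgeFinset.card + 1 :=
        Nat.lt_succ_of_le ((Finset.card_le_card hE).trans Finset.card_image_le)
    _ = W.card := by rw [hT.card_edgeFinset]; simp

/-! ### Ears -/

namespace Ear

variable {G : SimpleGraph V} (P : Ear G)

theorem isPath_of_ne (h : P.a ≠ P.b) : P.walk.IsPath :=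
  (P.ear.resolve_right fun ⟨hab, _⟩ => h hab).2

theorem nodup_support_tail : P.walk.support.tail.Nodup := by
  rcases P.ear with ⟨-, hpath⟩ | ⟨hab, hcycle⟩
  · exact hpath.support_nodup.tail
  · simpa only [Walk.support_copy] using hcycle.support_nodup

theorem mem_internal_or_eq {x : V} (hx : x ∈ P.walk.support) :
    x ∈ P.internal ∨ x = P.a ∨ x = P.b :=
  or_iff_not_imp_right.2 fun h => ⟨hx, h⟩

theorem start_notMem_support_tail (h : P.a ≠ P.b) : P.a ∉ P.walk.support.tail := by
  have hnodup := (P.isPath_of_ne h).support_nodup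
  rw [← Walk.cons_tail_support] at hnodup
  exact (List.nodup_cons.1 hnodup).1

theorem mem_internalFinset [DecidableEq V] {x : V} : x ∈ P.internalFinset ↔ x ∈ P.internal := by
  simp [internalFinset, internal, vertices, endpoints]

theorem internalFinset_eq_erase [DecidableEq V] :
    P.internalFinset = P.walk.support.tail.toFinset.erase P.b := by
  ext x
  rw [internalFinset, ← Walk.cons_tail_support, List.tail_cons]
  simp only [Finset.mem_sdiff, List.mem_toFinset, List.mem_cons, Finset.mem_insert,
    Finset.mem_singleton, Finset.mem_erase]
  by_cases hab : P.a = P.b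
  · grind
  · have hstart := P.start_notMem_support_tail hab
    grind

theorem card_internalFinset_add_one [DecidableEq V] :
    P.internalFinset.card + 1 = P.walk.length := by
  have hb : P.b ∈ P.walk.support.tail.toFinset :=
    List.mem_toFinset.2 (Walk.end_mem_tail_support (Walk.not_nil_iff_lt_length.2 P.length_pos))
  rw [internalFinset_eq_erase, Finset.card_erase_add_one hb,
    List.toFinset_card_of_nodup P.nodup_support_tail, List.length_tail, Walk.length_support,
    Nat.add_sub_cancel]

variable {P}

theorem IsTrivial.vertices_subset_endpoints (h : P.IsTrivial) : P.vertices ⊆ P.endpoints := by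
  classical
  have hempty : P.internalFinset = ∅ :=
    Finset.card_eq_zero.1 (Nat.succ_injective (P.card_internalFinset_add_one.trans h))
  intro x hx
  refine (P.mem_internal_or_eq hx).resolve_left fun hint => ?_
  simpa [hempty] using P.mem_internalFinset.2 hint

theorem exists_mem_internal_of_mem_edges (h : ¬ P.IsTrivial) {e : Sym2 V} (he : e ∈ P.edges) :
    ∃ x ∈ e, x ∈ P.internal := by
  induction e with
  | _ x y =>
    by_contra! hnone
    have hx := (P.mem_internal_or_eq (P.walk.fst_mem_support_of_mem_edges he)).resolve_left
      (hnone x (Sym2.mem_mk_left x y))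
    have hy := (P.mem_internal_or_eq (P.walk.snd_mem_support_of_mem_edges he)).resolve_left
      (hnone y (Sym2.mem_mk_right x y))
    have hxy : x ≠ y := (P.walk.adj_of_mem_edges he).ne
    have hends : P.a ≠ P.b ∧ s(P.a, P.b) = s(x, y) := by
      rcases hx with rfl | rfl <;> rcases hy with rfl | rfl <;> simp_all [Sym2.eq_swap, eq_comm]
    exact h ((P.isPath_of_ne hends.1).length_eq_one_of_mem_edges (hends.2 ▸ he))

end Ear

/-! ### Earmuffs -/

namespace Earmuff

variable {G : SimpleGraph V} {M : Finset (Finset V)}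

theorem mem_fst_or_notMem_eardrumVerts (em : Earmuff G M) {p : Finset V × Ear G}
    (hp : p ∈ em.pairs) {x : V} (hx : x ∈ p.2.walk.support) : x ∈ p.1 ∨ x ∉ eardrumVerts M := by
  rcases p.2.mem_internal_or_eq hx with hint | rfl | rfl
  · rw [em.internal_eq p hp] at hint
    exact .inl hint
  · exact .inr (em.ends_outside p hp).1
  · exact .inr (em.ends_outside p hp).2

theorem length_walk (em : Earmuff G M) {p : Finset V × Ear G} (hp : p ∈ em.pairs) :
    p.2.walk.length = p.1.card + 1 := by
  classical
  have hint : p.2.internalFinset = p.1 := by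
    ext x
    rw [Ear.mem_internalFinset, em.internal_eq p hp, Finset.mem_coe]
  rw [← p.2.card_internalFinset_add_one, hint]

theorem disjoint_edges (em : Earmuff G M) (hM : (M : Set (Finset V)).PairwiseDisjoint id)
    {p q : Finset V × Ear G} (hp : p ∈ em.pairs) (hq : q ∈ em.pairs) (hpq : p ≠ q) :
    p.2.edges.Disjoint q.2.edges := by
  have hfst : p.1 ≠ q.1 := fun h => hpq (List.inj_on_of_nodup_map em.nodup_fst hp hq h)
  wlog hne : p.1.Nonempty generalizing p q
  · refine (this hq hp hpq.symm hfst.symm ?_).symm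
    rw [Finset.not_nonempty_iff_eq_empty] at hne
    exact Finset.nonempty_iff_ne_empty.2 (hne ▸ hfst.symm)
  intro e hep heq
  have hnontrivial : ¬ p.2.IsTrivial := fun h => by
    have hlength := em.length_walk hp
    have hcard := hne.card_pos
    rw [Ear.IsTrivial] at h
    omega
  obtain ⟨x, hxe, hxp⟩ := Ear.exists_mem_internal_of_mem_edges hnontrivial hep
  rw [em.internal_eq p hp] at hxp
  rcases em.mem_fst_or_notMem_eardrumVerts hq (Walk.mem_support_of_mem_edges heq hxe) with hxq | hxM
  · exact Finset.disjoint_left.1 (hM (em.mem_M p hp) (em.mem_M q hq) hfst) hxp hxq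
  · exact hxM ⟨p.1, em.mem_M p hp, hxp⟩

section Members

variable [DecidableEq V]

/-- The index set `F ⊆ M` of the paths of an earmuff. -/
def members (em : Earmuff G M) : Finset (Finset V) := (em.pairs.map Prod.fst).toFinset

/-- The edges of the union of the paths of an earmuff. -/
def edges (em : Earmuff G M) : Finset (Sym2 V) := (em.pairs.flatMap fun p => p.2.edges).toFinset

theorem mem_edges (em : Earmuff G M) {e : Sym2 V} :
    e ∈ em.edges ↔ ∃ p ∈ em.pairs, e ∈ p.2.edges := by
  simp only [edges, List.mem_toFinset, List.mem_flatMap]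

theorem members_subset (em : Earmuff G M) : em.members ⊆ M := by
  intro f hf
  obtain ⟨p, hp, rfl⟩ := List.mem_map.1 (List.mem_toFinset.1 hf)
  exact em.mem_M p hp

theorem card_members (em : Earmuff G M) : em.members.card = em.pairs.length := by
  rw [members, List.toFinset_card_of_nodup em.nodup_fst, List.length_map]

theorem card_edges (em : Earmuff G M) (hM : (M : Set (Finset V)).PairwiseDisjoint id) :
    em.edges.card = ∑ f ∈ em.members, (f.card + 1) := by
  have hnodup : (em.pairs.flatMap fun p => p.2.edges).Nodup :=
    List.nodup_flatMap.2 ⟨fun p hp => (em.is_path p hp).2.isTrail.edges_nodup,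
      (List.Nodup.of_map _ em.nodup_fst).pairwise_of_forall_ne
        fun _ hp _ hq => em.disjoint_edges hM hp hq⟩
  rw [edges, List.toFinset_card_of_nodup hnodup, List.length_flatMap, members,
    List.sum_toFinset _ em.nodup_fst, List.map_map]
  exact congrArg List.sum
    (List.map_congr_left fun p hp => (Walk.length_edges _).trans (em.length_walk hp))

theorem coe_edges_subset (em : Earmuff G M) :
    ↑em.edges ⊆ (fromEdgeSet {e : Sym2 V | ∃ p ∈ em.pairs, e ∈ p.2.edges}).edgeSet := by
  intro e he
  obtain ⟨p, hp, hep⟩ := em.mem_edges.1 he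
  rw [edgeSet_fromEdgeSet]
  exact ⟨⟨p, hp, hep⟩, G.not_isDiag_of_mem_edgeSet (p.2.walk.edges_subset_edgeSet hep)⟩

theorem edges_subset_sym2 [Fintype V] (em : Earmuff G M)
    (hM : (M : Set (Finset V)).PairwiseDisjoint id) :
    em.edges ⊆ ((M \ em.members).biUnion id)ᶜ.sym2 := by
  intro e he
  obtain ⟨p, hp, hep⟩ := em.mem_edges.1 he
  refine Finset.mem_sym2_iff.2 fun x hx => Finset.mem_compl.2 fun hxU => ?_
  obtain ⟨g, hg, hxg⟩ := Finset.mem_biUnion.1 hxU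
  obtain ⟨hgM, hgF⟩ := Finset.mem_sdiff.1 hg
  have hpF : p.1 ∈ em.members := List.mem_toFinset.2 (List.mem_map_of_mem hp)
  have hpg : p.1 ≠ g := fun h => hgF (h ▸ hpF)
  rcases em.mem_fst_or_notMem_eardrumVerts hp (Walk.mem_support_of_mem_edges hep hx) with hxp | hxM
  · exact Finset.disjoint_left.1 (hM (em.mem_M p hp) hgM hpg) hxp hxg
  · exact hxM ⟨g, hgM, hxg⟩

end Members

theorem length_add_sum_card_lt [Fintype V] (em : Earmuff G M)
    (hM : (M : Set (Finset V)).PairwiseDisjoint id) (hr : (eardrumVerts M)ᶜ.Nonempty) :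
    em.pairs.length + ∑ f ∈ M, f.card < Fintype.card V := by
  classical
  obtain ⟨r, hr⟩ := hr
  have hrW : r ∈ ((M \ em.members).biUnion id)ᶜ := Finset.mem_compl.2 fun h => by
    obtain ⟨g, hg, hrg⟩ := Finset.mem_biUnion.1 h
    exact hr ⟨g, (Finset.mem_sdiff.1 hg).1, hrg⟩
  have hforest := card_lt_card_of_isAcyclic em.forest ⟨r, hrW⟩ em.coe_edges_subset
    (em.edges_subset_sym2 hM)
  have hcompl := Finset.card_compl_add_card ((M \ em.members).biUnion id)
  have hunused : ((M \ em.members).biUnion id).card = ∑ f ∈ M \ em.members, f.card :=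
    Finset.card_biUnion (hM.subset (Finset.coe_subset.2 Finset.sdiff_subset))
  have hsplit := Finset.sum_sdiff (f := Finset.card) em.members_subset
  rw [em.card_edges hM, Finset.sum_add_distrib, Finset.sum_const, smul_eq_mul, mul_one,
    em.card_members] at hforest
  omega

end Earmuff

theorem mu_add_sum_card_lt [Fintype V] (G : SimpleGraph V) {M : Finset (Finset V)}
    (hM : (M : Set (Finset V)).PairwiseDisjoint id) (hr : (eardrumVerts M)ᶜ.Nonempty) :
    mu G M + ∑ f ∈ M, f.card < Fintype.card V := by
  let noPaths : Earmuff G M :=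
    ⟨[], by simp, by simp, by simp, by simp, by simp, by simp, by simp⟩
  have hne : {n | ∃ em : Earmuff G M, em.pairs.length = n}.Nonempty := ⟨0, noPaths, rfl⟩
  have hbdd : BddAbove {n | ∃ em : Earmuff G M, em.pairs.length = n} := by
    refine ⟨Fintype.card V, ?_⟩
    rintro n ⟨em, rfl⟩
    exact ((Nat.le_add_right _ _).trans_lt (em.length_add_sum_card_lt hM hr)).le
  obtain ⟨em, hem⟩ := Nat.sSup_mem hne hbdd
  rw [mu, ← hem]
  exact em.length_add_sum_card_lt hM hr

/-! ### Counting the edges of an ear-decomposition -/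

theorem countP_eq_sum_get {α : Type*} (l : List α) (p : α → Prop) [DecidablePred p] :
    l.countP p = ∑ i : Fin l.length, if p (l.get i) then 1 else 0 := by
  have hsum : (l.map fun a => if p a then 1 else 0).sum = l.countP p := by
    induction l with
    | nil => rfl
    | cons a l ih => simp [List.countP_cons, ih, add_comm]
  exact hsum.symm.trans (Fin.sum_univ_fun_getElem l _).symm

theorem twelve_mul_le_of_two_le {ℓ : ℕ} (hℓ : 2 ≤ ℓ) :
    12 * ℓ ≤ 15 * (ℓ - 1 + if Even ℓ then 1 else 0) + 2 * if ℓ = 2 ∨ ℓ = 3 then ℓ else 0 := by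
  rcases (by omega : ℓ = 2 ∨ ℓ = 3 ∨ ℓ = 4 ∨ 5 ≤ ℓ) with rfl | rfl | rfl | h5
  · decide
  · decide
  · decide
  · omega

namespace EarDecomp

variable {G : SimpleGraph V} (D : EarDecomp G)

theorem notMem_priorVerts_of_mem_internal {i : Fin D.ears.length} {x : V}
    (hx : x ∈ (D.ears.get i).internal) : x ∉ priorVerts D.root D.ears i :=
  fun hprior => Set.notMem_empty x (D.internal_new i ▸ ⟨hx, hprior⟩)

theorem root_notMem_internal (i : Fin D.ears.length) : D.root ∉ (D.ears.get i).internal :=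
  fun h => D.notMem_priorVerts_of_mem_internal h (Set.mem_insert _ _)

variable [DecidableEq V]

theorem pairwise_disjoint_internalFinset :
    Pairwise fun i j => Disjoint (D.ears.get i).internalFinset (D.ears.get j).internalFinset := by
  intro i j hij
  wlog hlt : i < j generalizing i j
  · exact (this hij.symm (hij.lt_or_gt.resolve_left hlt)).symm
  refine Finset.disjoint_left.2 fun x hi hj => ?_
  rw [Ear.mem_internalFinset] at hi hj
  exact D.notMem_priorVerts_of_mem_internal hj (.inr ⟨i, hlt, hi.1⟩)

theorem sum_card_internalFinset_lt [Fintype V] :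
    ∑ i, (D.ears.get i).internalFinset.card < Fintype.card V := by
  rw [← Finset.card_biUnion fun i _ j _ hij => D.pairwise_disjoint_internalFinset hij]
  refine Finset.card_lt_univ_of_notMem (x := D.root) fun h => ?_
  obtain ⟨i, -, hi⟩ := Finset.mem_biUnion.1 h
  exact D.root_notMem_internal i ((D.ears.get i).mem_internalFinset.1 hi)

theorem root_notMem_eardrumVerts : D.root ∉ eardrumVerts D.eardrum := by
  rintro ⟨f, hf, hroot⟩
  obtain ⟨i, -, rfl⟩ := Finset.mem_image.1 hf
  exact D.root_notMem_internal i ((D.ears.get i).mem_internalFinset.1 hroot)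

theorem pairwiseDisjoint_eardrum : (D.eardrum : Set (Finset V)).PairwiseDisjoint id := by
  intro f hf g hg hfg
  obtain ⟨i, -, rfl⟩ := Finset.mem_image.1 hf
  obtain ⟨j, -, rfl⟩ := Finset.mem_image.1 hg
  exact D.pairwise_disjoint_internalFinset fun hij => hfg (by rw [hij])

theorem injOn_internalFinset :
    Set.InjOn (fun i => (D.ears.get i).internalFinset) {i | ¬ (D.ears.get i).IsTrivial} := by
  intro i hi j _ hij
  by_contra hne
  have hdisj : Disjoint (D.ears.get i).internalFinset (D.ears.get j).internalFinset :=
    D.pairwise_disjoint_internalFinset hne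
  replace hij : (D.ears.get i).internalFinset = (D.ears.get j).internalFinset := hij
  rw [← hij, disjoint_self, Finset.bot_eq_empty, ← Finset.card_eq_zero] at hdisj
  have hcard := (D.ears.get i).card_internalFinset_add_one
  exact hi (by rw [Ear.IsTrivial, ← hcard, hdisj])

open Classical in
theorem sum_length_pendant_short :
    ∑ i with (D.ears.get i).IsShort ∧ D.IsPendant i, (D.ears.get i).walk.length =
      D.eardrum.card + ∑ f ∈ D.eardrum, f.card := by
  have hinj : Set.InjOn (fun i => (D.ears.get i).internalFinset)
      (Finset.univ.filter fun i => (D.ears.get i).IsShort ∧ D.IsPendant i) :=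
    D.injOn_internalFinset.mono fun i hi => (Finset.mem_filter.1 hi).2.2.1
  calc ∑ i with (D.ears.get i).IsShort ∧ D.IsPendant i, (D.ears.get i).walk.length
      = ∑ i with (D.ears.get i).IsShort ∧ D.IsPendant i,
          (1 + (D.ears.get i).internalFinset.card) :=
        Finset.sum_congr rfl fun i _ => by rw [add_comm, Ear.card_internalFinset_add_one]
    _ = ∑ f ∈ D.eardrum, (1 + f.card) := by
        rw [eardrum]
        convert (Finset.sum_image (f := fun f => 1 + f.card) hinj).symm
    _ = D.eardrum.card + ∑ f ∈ D.eardrum, f.card := by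
        rw [Finset.sum_add_distrib, Finset.card_eq_sum_ones]

open Classical in
theorem mu_add_sum_length_pendant_short_lt [Fintype V] :
    mu G D.eardrum + ∑ i with (D.ears.get i).IsShort ∧ D.IsPendant i,
      (D.ears.get i).walk.length < Fintype.card V + D.eardrum.card := by
  have hmu := mu_add_sum_card_lt G D.pairwiseDisjoint_eardrum ⟨_, D.root_notMem_eardrumVerts⟩
  rw [D.sum_length_pendant_short]
  omega

open Classical in
theorem card_nontrivialEdges_le :
    D.nontrivialEdges.card ≤
      ∑ i with ¬ (D.ears.get i).IsTrivial, (D.ears.get i).walk.length := by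
  refine Finset.card_biUnion_le.trans ?_
  convert Finset.sum_le_sum fun i _ =>
    (List.toFinset_card_le (D.ears.get i).edges).trans (Walk.length_edges _).le

open Classical in
theorem twelve_mul_length_le (hshort : ∀ i, (D.ears.get i).IsShort → D.IsPendant i)
    {i : Fin D.ears.length} (hi : ¬ (D.ears.get i).IsTrivial) :
    12 * (D.ears.get i).walk.length ≤
      15 * ((D.ears.get i).internalFinset.card + if Even (D.ears.get i).walk.length then 1 else 0) +
      2 * if (D.ears.get i).IsShort ∧ D.IsPendant i then (D.ears.get i).walk.length else 0 := by
  have hlength : 2 ≤ (D.ears.get i).walk.length :=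
    (D.ears.get i).length_pos.lt_of_ne' hi
  have hcard : (D.ears.get i).internalFinset.card = (D.ears.get i).walk.length - 1 :=
    Nat.eq_sub_of_add_eq (D.ears.get i).card_internalFinset_add_one
  have hpendant : (D.ears.get i).IsShort ∧ D.IsPendant i ↔ (D.ears.get i).IsShort :=
    and_iff_left_of_imp (hshort i)
  simp only [hcard, hpendant]
  convert twelve_mul_le_of_two_le hlength
  rfl

open Classical in
theorem twelve_mul_card_nontrivialEdges_le
    (hshort : ∀ i, (D.ears.get i).IsShort → D.IsPendant i) :
    12 * D.nontrivialEdges.card ≤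
      15 * (∑ i, (D.ears.get i).internalFinset.card + D.evenEars) +
      2 * ∑ i with (D.ears.get i).IsShort ∧ D.IsPendant i, (D.ears.get i).walk.length := by
  rw [evenEars, countP_eq_sum_get, ← Finset.sum_add_distrib, Finset.sum_filter, Finset.mul_sum,
    Finset.mul_sum, ← Finset.sum_add_distrib]
  calc 12 * D.nontrivialEdges.card
      ≤ ∑ i with ¬ (D.ears.get i).IsTrivial, 12 * (D.ears.get i).walk.length := by
        rw [← Finset.mul_sum]
        exact Nat.mul_le_mul_left 12 D.card_nontrivialEdges_le
    _ ≤ _ := Finset.sum_le_sum fun i hi =>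
        D.twelve_mul_length_le hshort (Finset.mem_filter.1 hi).2
    _ ≤ _ := Finset.sum_le_univ_sum_of_nonneg fun _ => Nat.zero_le _

theorem card_nontrivialEdges_le_mul_max [Fintype V]
    (hshort : ∀ i, (D.ears.get i).IsShort → D.IsPendant i) :
    (D.nontrivialEdges.card : ℚ) ≤ 17/12 *
      max ((Fintype.card V : ℚ) + (D.evenEars : ℚ) - 1)
        ((Fintype.card V : ℚ) + (D.eardrum.card : ℚ) - (mu G D.eardrum : ℚ) - 1) := by
  classical
  set Lφ : ℚ := (Fintype.card V : ℚ) + (D.evenEars : ℚ) - 1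
  set Lμ : ℚ := (Fintype.card V : ℚ) + (D.eardrum.card : ℚ) - (mu G D.eardrum : ℚ) - 1
  have hcount : 12 * (D.nontrivialEdges.card : ℚ) ≤
      15 * (∑ i, ((D.ears.get i).internalFinset.card : ℚ) + D.evenEars) +
      2 * ∑ i with (D.ears.get i).IsShort ∧ D.IsPendant i, ((D.ears.get i).walk.length : ℚ) :=
    mod_cast D.twelve_mul_card_nontrivialEdges_le hshort
  have hφ : ∑ i, ((D.ears.get i).internalFinset.card : ℚ) + 1 ≤ Fintype.card V :=
    mod_cast D.sum_card_internalFinset_lt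
  have hμ : mu G D.eardrum + ∑ i with (D.ears.get i).IsShort ∧ D.IsPendant i,
      ((D.ears.get i).walk.length : ℚ) + 1 ≤ Fintype.card V + D.eardrum.card :=
    mod_cast D.mu_add_sum_length_pendant_short_lt
  calc (D.nontrivialEdges.card : ℚ) ≤ (15 * Lφ + 2 * Lμ) / 12 := by linarith
    _ ≤ 17/12 * max Lφ Lμ := by linarith [le_max_left Lφ Lμ, le_max_right Lφ Lμ]

end EarDecomp

/-! ### Connectivity of the union of the nontrivial ears -/

/-- The vertices of `S` other than `v` lie in a single connected component of `H - v`. The paths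
joining them may leave `S`. -/
def ConnectedAvoiding (H : SimpleGraph V) (v : V) (S : Set V) : Prop :=
  ∀ x y : ({v}ᶜ : Set V), ↑x ∈ S → ↑y ∈ S → (H.induce {v}ᶜ).Reachable x y

theorem exists_reachable_end_of_isPath {H : SimpleGraph V} {v a b : V} {p : H.Walk a b}
    (hp : p.IsPath) (x : ({v}ᶜ : Set V)) (hx : ↑x ∈ p.support) :
    ∃ y : ({v}ᶜ : Set V), (↑y = a ∨ ↑y = b) ∧ (H.induce {v}ᶜ).Reachable x y := by
  classical
  by_cases hv : v ∈ (p.takeUntil x hx).support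
  · have hdrop : ∀ z ∈ (p.dropUntil x hx).support, z ∈ ({v}ᶜ : Set V) := by
      rintro z hz rfl
      rw [← p.take_spec hx] at hp
      exact hp.ne_of_mem_support_of_append (Ne.symm x.2) hv hz rfl
    exact ⟨⟨b, hdrop b (Walk.end_mem_support _)⟩, .inr rfl, ⟨(p.dropUntil x hx).induce _ hdrop⟩⟩
  · have htake : ∀ z ∈ (p.takeUntil x hx).support, z ∈ ({v}ᶜ : Set V) :=
      fun z hz hzv => hv (hzv ▸ hz)
    exact ⟨⟨a, htake a (Walk.start_mem_support _)⟩, .inl rfl,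
      (Walk.reachable ((p.takeUntil x hx).induce _ htake)).symm⟩

namespace ConnectedAvoiding

variable {H : SimpleGraph V} {v : V}

theorem singleton (r : V) : ConnectedAvoiding H v {r} := by
  intro x y hx hy
  rw [Subtype.ext (hx.trans hy.symm : (x : V) = y)]

theorem mono {S T : Set V} (hT : ConnectedAvoiding H v T) (hST : S ⊆ T) :
    ConnectedAvoiding H v S :=
  fun x y hx hy => hT x y (hST hx) (hST hy)

theorem of_forall_exists_reachable {S T : Set V} (hS : ConnectedAvoiding H v S)
    (hT : ∀ x : ({v}ᶜ : Set V), ↑x ∈ T →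
      ∃ y : ({v}ᶜ : Set V), ↑y ∈ S ∧ (H.induce {v}ᶜ).Reachable x y) :
    ConnectedAvoiding H v T := by
  intro x y hx hy
  obtain ⟨x', hx', hxx'⟩ := hT x hx
  obtain ⟨y', hy', hyy'⟩ := hT y hy
  exact hxx'.trans ((hS x' y' hx' hy').trans hyy'.symm)

theorem pair_of_adj {a b : V} (hab : H.Adj a b) : ConnectedAvoiding H v {a, b} := by
  rintro ⟨x, hxv⟩ ⟨y, hyv⟩ (rfl | rfl) (rfl | rfl)
  · rfl
  · exact (induce_adj.2 hab).reachable
  · exact (induce_adj.2 hab.symm).reachable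
  · rfl

theorem union_path {S : Set V} (hS : ConnectedAvoiding H v S) {a b : V} {p : H.Walk a b}
    (hp : p.IsPath) (ha : a ∈ S) (hb : b ∈ S) :
    ConnectedAvoiding H v (S ∪ {x | x ∈ p.support}) := by
  refine hS.of_forall_exists_reachable ?_
  rintro x (hx | hx)
  · exact ⟨x, hx, .rfl⟩
  · obtain ⟨y, hy, hxy⟩ := exists_reachable_end_of_isPath hp x hx
    exact ⟨y, by rcases hy with hy | hy <;> rwa [hy], hxy⟩

theorem of_isCycle {a : V} {w : H.Walk a a} (hw : w.IsCycle) :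
    ConnectedAvoiding H v {x | x ∈ w.support} := by
  cases w with
  | nil => exact absurd rfl hw.ne_nil
  | @cons _ c _ hac q =>
    have hq := ((pair_of_adj hac).union_path (v := v) (Walk.cons_isCycle_iff q hac |>.1 hw).1
      (.inr rfl) (.inl rfl))
    refine hq.mono fun x hx => ?_
    rcases List.mem_cons.1 (Walk.support_cons hac q ▸ hx) with rfl | hx
    · exact .inl (.inl rfl)
    · exact .inr hx

end ConnectedAvoiding

theorem priorVerts_zero {G : SimpleGraph V} (root : V) (ears : List (Ear G)) :
    priorVerts root ears 0 = {root} := by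
  simp [priorVerts]

theorem priorVerts_succ_s11 {G : SimpleGraph V} (root : V) (ears : List (Ear G))
    (i : Fin ears.length) :
    priorVerts root ears (i + 1) = priorVerts root ears i ∪ (ears.get i).vertices := by
  ext x
  simp only [priorVerts, Set.mem_insert_iff, Set.mem_ofPred_eq, Set.mem_union,
    Nat.lt_succ_iff_lt_or_eq, ← Fin.ext_iff, or_and_right, exists_or, exists_eq_left, or_assoc]

theorem TwoVertexConnected.exists_adj {G : SimpleGraph V} (h : TwoVertexConnected G) (x : V) :
    ∃ y, G.Adj x y := by
  have hcard : 3 ≤ Cardinal.mk V := by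
    have : Finite V := Nat.finite_of_card_ne_zero (by have := h.1; omega)
    rw [← Nat.cast_card]
    exact_mod_cast h.1
  obtain ⟨z, hzx, -⟩ := Cardinal.exists_ne_ne_of_three_le hcard x x
  obtain ⟨y, hyx, hyz⟩ := Cardinal.exists_ne_ne_of_three_le hcard x z
  have : Nontrivial ({z}ᶜ : Set V) :=
    ⟨⟨x, hzx.symm⟩, ⟨y, hyz⟩, fun h => hyx (congrArg Subtype.val h).symm⟩
  obtain ⟨w, hw⟩ := (h.2 z).preconnected.exists_adj_of_nontrivial ⟨x, hzx.symm⟩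
  exact ⟨w, hw⟩

namespace EarDecomp

variable {G : SimpleGraph V} (D : EarDecomp G)

theorem mem_priorVerts_length_of_adj {x y : V} (hxy : G.Adj x y) :
    x ∈ priorVerts D.root D.ears D.ears.length := by
  obtain ⟨i, hi, -⟩ := D.edge_cover s(x, y) hxy
  exact .inr ⟨i, i.2, Walk.fst_mem_support_of_mem_edges _ hi⟩

variable [DecidableEq V]

/-- The subgraph `H` of `G` formed by the edges of the nontrivial ears. -/
abbrev nontrivialGraph : SimpleGraph V := fromEdgeSet (↑D.nontrivialEdges : Set (Sym2 V))

variable {D}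

theorem mem_nontrivialEdges {e : Sym2 V} :
    e ∈ D.nontrivialEdges ↔ ∃ i, ¬ (D.ears.get i).IsTrivial ∧ e ∈ (D.ears.get i).edges := by
  simp [nontrivialEdges]

variable (D) in
theorem nontrivialGraph_le : D.nontrivialGraph ≤ G := by
  intro x y hxy
  obtain ⟨i, -, hi⟩ := mem_nontrivialEdges.1 ((fromEdgeSet_adj _).1 hxy).1
  exact Walk.adj_of_mem_edges _ hi

theorem mem_edgeSet_nontrivialGraph {i : Fin D.ears.length} (hi : ¬ (D.ears.get i).IsTrivial)
    {e : Sym2 V} (he : e ∈ (D.ears.get i).walk.edges) : e ∈ D.nontrivialGraph.edgeSet := by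
  rw [edgeSet_fromEdgeSet]
  exact ⟨mem_nontrivialEdges.2 ⟨i, hi, he⟩,
    G.not_isDiag_of_mem_edgeSet (Walk.edges_subset_edgeSet _ he)⟩

theorem IsOpen.connectedAvoiding_union_vertices (hopen : D.IsOpen) {v : V} {i : Fin D.ears.length}
    (hi : ¬ (D.ears.get i).IsTrivial)
    (hprior : ConnectedAvoiding D.nontrivialGraph v (priorVerts D.root D.ears i)) :
    ConnectedAvoiding D.nontrivialGraph v
      (priorVerts D.root D.ears i ∪ (D.ears.get i).vertices) := by
  have ha : (D.ears.get i).a ∈ priorVerts D.root D.ears i := D.endpoints_sub i (.inl rfl)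
  have hb : (D.ears.get i).b ∈ priorVerts D.root D.ears i := D.endpoints_sub i (.inr rfl)
  have hedges := fun e => mem_edgeSet_nontrivialGraph hi (e := e)
  rcases (D.ears.get i).ear with ⟨-, hpath⟩ | ⟨hab, hcycle⟩
  · have hconn := hprior.union_path (hpath.transfer hedges) ha hb
    rwa [Walk.support_transfer] at hconn
  · have hi0 : (i : ℕ) = 0 := by
      by_contra h
      exact hopen i (Nat.one_le_iff_ne_zero.2 h) hab
    rw [hi0, priorVerts_zero] at ha ⊢
    have hverts : {D.root} ∪ (D.ears.get i).vertices ⊆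
        {x | x ∈ ((D.ears.get i).walk.copy rfl hab.symm).support} := by
      rw [Walk.support_copy, ← Set.mem_singleton_iff.1 ha]
      exact Set.union_subset (Set.singleton_subset_iff.2 (Walk.start_mem_support _)) subset_rfl
    have hconn := ConnectedAvoiding.of_isCycle (v := v)
      (hcycle.transfer (H := D.nontrivialGraph) (by simpa only [Walk.edges_copy] using hedges))
    rw [Walk.support_transfer] at hconn
    exact hconn.mono hverts

theorem IsOpen.connectedAvoiding_priorVerts (hopen : D.IsOpen) (v : V) {i : ℕ}
    (hi : i ≤ D.ears.length) :
    ConnectedAvoiding D.nontrivialGraph v (priorVerts D.root D.ears i) := by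
  induction i with
  | zero =>
    rw [priorVerts_zero]
    exact .singleton _
  | succ i ih =>
    have hprior := ih (Nat.le_of_succ_le hi)
    rw [priorVerts_succ_s11 D.root D.ears ⟨i, hi⟩]
    by_cases htrivial : (D.ears.get ⟨i, hi⟩).IsTrivial
    · exact hprior.mono (Set.union_subset subset_rfl
        (htrivial.vertices_subset_endpoints.trans (D.endpoints_sub ⟨i, hi⟩)))
    · exact hopen.connectedAvoiding_union_vertices htrivial hprior

theorem IsOpen.twoVertexConnected_nontrivialGraph (hopen : D.IsOpen) (h2 : TwoVertexConnected G) :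
    TwoVertexConnected D.nontrivialGraph := by
  refine ⟨h2.1, fun v => ?_⟩
  have hcover (x : V) : x ∈ priorVerts D.root D.ears D.ears.length :=
    D.mem_priorVerts_length_of_adj (h2.exists_adj x).choose_spec
  have : Nonempty ({v}ᶜ : Set V) := (h2.2 v).nonempty
  exact ⟨fun x y => hopen.connectedAvoiding_priorVerts v le_rfl x y (hcover x) (hcover y)⟩

end EarDecomp

theorem statement_11_general {V : Type*} [Fintype V] [DecidableEq V] (G : SimpleGraph V)
    (h2 : TwoVertexConnected G) (D : EarDecomp G) (hopen : D.IsOpen)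
    (hshort : ∀ i, (D.ears.get i).IsShort → D.IsPendant i) :
    SimpleGraph.fromEdgeSet (↑D.nontrivialEdges : Set (Sym2 V)) ≤ G ∧
    TwoVertexConnected (SimpleGraph.fromEdgeSet (↑D.nontrivialEdges : Set (Sym2 V))) ∧
    (D.nontrivialEdges.card : ℚ) ≤ 17/12 *
      max ((Fintype.card V : ℚ) + (D.evenEars : ℚ) - 1)
        ((Fintype.card V : ℚ) + (D.eardrum.card : ℚ) - (mu G D.eardrum : ℚ) - 1) :=
  ⟨D.nontrivialGraph_le, hopen.twoVertexConnected_nontrivialGraph h2,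
    D.card_nontrivialEdges_le_mul_max hshort⟩

/-- For an open nice ear-decomposition `D` with exactly `φ(G)` even ears
of a 2-vertex-connected graph `G` of minimum degree at least `3`, the spanning subgraph
`H` of `G` formed by the edges of the nontrivial ears of `D` is 2-vertex-connected and has
at most `(17/12)·max(L_φ(G), L_µ(G,M))` edges, where `M` is the eardrum arising from the
pendant short ears of `D`. -/
theorem statement_11 {V : Type*} [Fintype V] [DecidableEq V] (G : SimpleGraph V)
    [DecidableRel G.Adj]
    (h2 : TwoVertexConnected G) (hdeg : ∀ v : V, 3 ≤ G.degree v)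
    (D : EarDecomp G) (hnice : D.IsNice) (hmin : D.evenEars = phi G) :
    SimpleGraph.fromEdgeSet (↑D.nontrivialEdges : Set (Sym2 V)) ≤ G ∧
    TwoVertexConnected (SimpleGraph.fromEdgeSet (↑D.nontrivialEdges : Set (Sym2 V))) ∧
    (D.nontrivialEdges.card : ℚ) ≤ 17/12 *
      max ((Fintype.card V : ℚ) + (phi G : ℚ) - 1)
        ((Fintype.card V : ℚ) + (D.eardrum.card : ℚ) - (mu G D.eardrum : ℚ) - 1) := by
  rw [← hmin]
  exact statement_11_general G h2 D hnice.1 hnice.2.1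
end
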